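/- Fix an integer d ≥ 3 and a real p with 1/(d-1) < p < 1. For every ε, b > 0 there exist R and c > 0 such that: if 𝒢 is a regular (b,d)-expander on n vertices with girth greater than 2R, and G ∼ 𝒢_p, then the probability that the total number of vertices in the 2-cores of all connected components of G other than a largest component exceeds εn is at most exp(−c n). -/

import Mathlib

open scoped Classical symmDiff

noncomputable section

namespace Percolation

variable {V : Type} [Fintype V] [DecidableEq V]

/-- The edge set of `G` as a finset. -/
noncomputable def edgeFinset' (G : SimpleGraph V) : Finset (Sym2 V) :=
  Finset.univ.filter (· ∈ G.edgeSet)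

/-- Probability that bond percolation on `G` with parameter `p` produces a spanning
subgraph satisfying `P`. -/
noncomputable def percProb (G : SimpleGraph V) (p : ℝ) (P : SimpleGraph V → Prop) : ℝ :=
  ∑ s ∈ (edgeFinset' G).powerset,
    (p ^ s.card * (1 - p) ^ ((edgeFinset' G).card - s.card)) *
      (if P (SimpleGraph.fromEdgeSet (↑s)) then 1 else 0)

/-- Joint probability for two independent bond percolations on `G`. -/
noncomputable def percProb2 (G : SimpleGraph V) (p₁ p₂ : ℝ)
    (P : SimpleGraph V → SimpleGraph V → Prop) : ℝ :=
  ∑ s ∈ (edgeFinset' G).powerset, ∑ t ∈ (edgeFinset' G).powerset,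
    (p₁ ^ s.card * (1 - p₁) ^ ((edgeFinset' G).card - s.card)) *
    (p₂ ^ t.card * (1 - p₂) ^ ((edgeFinset' G).card - t.card)) *
      (if P (SimpleGraph.fromEdgeSet (↑s)) (SimpleGraph.fromEdgeSet (↑t)) then 1 else 0)

/-- Number of edges of `G` joining `S` to its complement. -/
noncomputable def cutCard (G : SimpleGraph V) (S : Finset V) : ℕ :=
  ((edgeFinset' G).filter (fun e => ∃ x ∈ S, ∃ y, y ∉ S ∧ e = s(x, y))).card

/-- `G` is a `(b,d)`-expander: max degree at most `d`, and every vertex set of size at most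
`n/2` has at least `b|S|` edges to its complement. -/
def IsExpander (G : SimpleGraph V) (b : ℝ) (d : ℕ) : Prop :=
  (∀ v, (G.neighborSet v).ncard ≤ d) ∧
  ∀ S : Finset V, (S.card : ℝ) ≤ Fintype.card V / 2 → b * S.card ≤ cutCard G S

/-- `G` is a regular `(b,d)`-expander. -/
def IsRegularExpander (G : SimpleGraph V) (b : ℝ) (d : ℕ) : Prop :=
  IsExpander G b d ∧ ∀ v, (G.neighborSet v).ncard = d

/-- The vertices of the connected component `c` of `G`. -/
noncomputable def compVerts (G : SimpleGraph V) (c : G.ConnectedComponent) : Finset V :=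
  Finset.univ.filter (fun v => G.connectedComponentMk v = c)

/-- The edges of the connected component `c` of `G`. -/
noncomputable def compEdges (G : SimpleGraph V) (c : G.ConnectedComponent) : Finset (Sym2 V) :=
  (edgeFinset' G).filter (fun e => ∀ v ∈ e, G.connectedComponentMk v = c)

/-- `c` is a largest connected component of `G`. -/
def IsLargestComp (G : SimpleGraph V) (c : G.ConnectedComponent) : Prop :=
  ∀ c' : G.ConnectedComponent, (compVerts G c').card ≤ (compVerts G c).card

/-- The 2-core of the connected component `c` of `G` : the maximal subgraph of `G`
supported inside `c` all of whose vertices have degree at least 2. -/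
noncomputable def twoCoreComp (G : SimpleGraph V) (c : G.ConnectedComponent) : SimpleGraph V :=
  sSup {H : SimpleGraph V | H ≤ G ∧ (∀ v ∈ H.support, G.connectedComponentMk v = c) ∧
    ∀ v ∈ H.support, 2 ≤ (H.neighborSet v).ncard}

/-- The event `A^R_{x,y}(H)`: the connected component of `y` in `H` with the edge `xy`
removed (if present) has at least `R` vertices. -/
def eventA (H : SimpleGraph V) (R : ℕ) (x y : V) : Prop :=
  R ≤ (compVerts (H.deleteEdges {s(x, y)})
        ((H.deleteEdges {s(x, y)}).connectedComponentMk y)).card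

/-- `E₁(H)`: edges `xy` of `H` such that `A^R_{x,y}` or `A^R_{y,x}` holds. -/
noncomputable def E1set (H : SimpleGraph V) (R : ℕ) : Finset (Sym2 V) :=
  (edgeFinset' H).filter (fun e => ∃ x y, e = s(x, y) ∧ (eventA H R x y ∨ eventA H R y x))

/-- `V₁(H)`: vertices `x` such that for some `y`, `xy ∈ E(H)` and `A^R_{x,y}` holds. -/
noncomputable def V1set (H : SimpleGraph V) (R : ℕ) : Finset V :=
  Finset.univ.filter (fun x => ∃ y, H.Adj x y ∧ eventA H R x y)

/-- `E₂(H)`: edges `xy` of `H` such that both `A^R_{x,y}` and `A^R_{y,x}` hold. -/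
noncomputable def E2set (H : SimpleGraph V) (R : ℕ) : Finset (Sym2 V) :=
  (edgeFinset' H).filter (fun e => ∃ x y, e = s(x, y) ∧ eventA H R x y ∧ eventA H R y x)

/-- `V₂(H)`: vertices incident to an edge of `E₂(H)`. -/
noncomputable def V2set (H : SimpleGraph V) (R : ℕ) : Finset V :=
  Finset.univ.filter (fun x => ∃ e ∈ E2set H R, x ∈ e)

/-- `V̄₁(H)`: vertices `y` such that `A^R_{x,y}(H)` holds for some `x`. -/
noncomputable def Vbar1 (H : SimpleGraph V) (R : ℕ) : Finset V :=
  Finset.univ.filter (fun y => ∃ x, eventA H R x y)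

/-- `S` is `k`-thick in `H`: a union of pairwise disjoint subsets, each of size at least
`k`, each inducing a connected subgraph of `H`. -/
def IsThick (H : SimpleGraph V) (k : ℕ) (S : Finset V) : Prop :=
  ∃ P : Finset (Finset V),
    (∀ T ∈ P, k ≤ T.card ∧ (H.induce (↑T : Set V)).Connected) ∧
    (↑P : Set (Finset V)).PairwiseDisjoint id ∧ S = P.biUnion id

/-- `S` is a separator of `K`. -/
def IsSeparator {W : Type} [Fintype W] (K : SimpleGraph W) (S : Finset W) : Prop :=
  ∃ A B : Finset W, Disjoint A B ∧ Disjoint A S ∧ Disjoint B S ∧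
    (∀ w, w ∈ A ∨ w ∈ B ∨ w ∈ S) ∧
    (∀ a ∈ A, ∀ b ∈ B, ¬ K.Adj a b) ∧
    3 * A.card ≤ 2 * Fintype.card W ∧ 3 * B.card ≤ 2 * Fintype.card W

set_option linter.unusedSectionVars false

section BernoulliExp

variable {α : Type} [DecidableEq α]

/-- Expectation of `F` at a random subset of `E` containing each element independently with
probability `p`. -/
def bernoulliExp (p : ℝ) (E : Finset α) (F : Finset α → ℝ) : ℝ :=
  ∑ s ∈ E.powerset, p ^ s.card * (1 - p) ^ (E.card - s.card) * F s

/-- Membership of `e` in the argument does not affect `F`. -/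
def Ignores {β : Type} (F : Finset α → β) (e : α) : Prop := ∀ s, F (insert e s) = F s

lemma bernoulliExp_empty (p : ℝ) (F : Finset α → ℝ) : bernoulliExp p ∅ F = F ∅ := by
  simp [bernoulliExp]

lemma bernoulliExp_insert (p : ℝ) {E : Finset α} {e : α} (he : e ∉ E) (F : Finset α → ℝ) :
    bernoulliExp p (insert e E) F
      = (1 - p) * bernoulliExp p E F + p * bernoulliExp p E (fun s => F (insert e s)) := by
  unfold bernoulliExp
  rw [Finset.sum_powerset_insert he, Finset.mul_sum, Finset.mul_sum]
  congr 1
  · refine Finset.sum_congr rfl fun s hs => ?_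
    have hs' := Finset.card_le_card (Finset.mem_powerset.1 hs)
    rw [Finset.card_insert_of_notMem he, Nat.sub_add_comm hs', pow_succ]
    ring
  · refine Finset.sum_congr rfl fun s hs => ?_
    have hes : e ∉ s := fun h => he (Finset.mem_powerset.1 hs h)
    rw [Finset.card_insert_of_notMem he, Finset.card_insert_of_notMem hes,
      Nat.add_sub_add_right, pow_succ]
    ring

lemma bernoulliExp_mono {p : ℝ} (h0 : 0 ≤ p) (h1 : p ≤ 1) {E : Finset α} {F F' : Finset α → ℝ}
    (h : ∀ s ⊆ E, F s ≤ F' s) : bernoulliExp p E F ≤ bernoulliExp p E F' := by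
  refine Finset.sum_le_sum fun s hs => ?_
  have : 0 ≤ 1 - p := by linarith
  exact mul_le_mul_of_nonneg_left (h s (Finset.mem_powerset.1 hs)) (by positivity)

lemma bernoulliExp_congr {p : ℝ} {E : Finset α} {F F' : Finset α → ℝ}
    (h : ∀ s ⊆ E, F s = F' s) : bernoulliExp p E F = bernoulliExp p E F' :=
  Finset.sum_congr rfl fun s hs => by rw [h s (Finset.mem_powerset.1 hs)]

lemma bernoulliExp_add (p : ℝ) (E : Finset α) (F F' : Finset α → ℝ) :
    bernoulliExp p E (fun s => F s + F' s) = bernoulliExp p E F + bernoulliExp p E F' := by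
  simp [bernoulliExp, mul_add, Finset.sum_add_distrib]

lemma bernoulliExp_const_mul (p c : ℝ) (E : Finset α) (F : Finset α → ℝ) :
    bernoulliExp p E (fun s => c * F s) = c * bernoulliExp p E F := by
  simp only [bernoulliExp, Finset.mul_sum]
  exact Finset.sum_congr rfl fun s _ => by ring

lemma bernoulliExp_sum {ι : Type} (p : ℝ) (E : Finset α) (I : Finset ι)
    (F : ι → Finset α → ℝ) :
    bernoulliExp p E (fun s => ∑ i ∈ I, F i s) = ∑ i ∈ I, bernoulliExp p E (F i) := by
  simp only [bernoulliExp, Finset.mul_sum]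
  exact Finset.sum_comm

lemma bernoulliExp_const (p c : ℝ) (E : Finset α) : bernoulliExp p E (fun _ => c) = c := by
  induction E using Finset.induction_on with
  | empty => exact bernoulliExp_empty _ _
  | insert e E he ih => rw [bernoulliExp_insert p he, ih]; ring

lemma bernoulliExp_one_sub (p : ℝ) (E : Finset α) (F : Finset α → ℝ) :
    bernoulliExp p E (fun s => 1 - F s) = 1 - bernoulliExp p E F := by
  have h := bernoulliExp_add p E (fun _ => 1) (fun s => (-1) * F s)
  rw [bernoulliExp_const, bernoulliExp_const_mul] at h
  simp only [sub_eq_add_neg, neg_eq_neg_one_mul (F _)]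
  rw [h]; ring

/-- The union of two independent random subsets is again a Bernoulli random subset. -/
lemma bernoulliExp_union {p p' δ : ℝ} (h : 1 - p = (1 - p') * (1 - δ)) (E : Finset α)
    (F : Finset α → ℝ) :
    bernoulliExp p E F = bernoulliExp p' E (fun s => bernoulliExp δ E (fun t => F (s ∪ t))) := by
  induction E using Finset.induction_on generalizing F with
  | empty => simp [bernoulliExp_empty]
  | insert e E he ih =>
    rw [bernoulliExp_insert p he, bernoulliExp_insert p' he]
    simp only [bernoulliExp_insert δ he]
    rw [bernoulliExp_add, bernoulliExp_add]
    simp only [bernoulliExp_const_mul]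
    rw [ih, ih]
    have e1 : ∀ s t : Finset α, s ∪ insert e t = insert e (s ∪ t) := fun s t => by simp
    have e2 : ∀ s t : Finset α, insert e s ∪ t = insert e (s ∪ t) := fun s t => by simp
    simp only [e1, e2, Finset.insert_idem]
    have hp : p = 1 - (1 - p') * (1 - δ) := by linarith
    rw [hp]
    ring

lemma Ignores.insert_fixed {β : Type} {F : Finset α → β} {e : α} (h : Ignores F e) (a : α) :
    Ignores (fun s => F (insert a s)) e := fun s => by
  change F (insert a (insert e s)) = F (insert a s)
  rw [Finset.insert_comm, h]

lemma Ignores.comp {β γ : Type} {F : Finset α → β} {e : α} (h : Ignores F e) (g : β → γ) :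
    Ignores (fun s => g (F s)) e := fun s => congrArg g (h s)

lemma bernoulliExp_mul (p : ℝ) (E : Finset α) (F F' : Finset α → ℝ)
    (h : ∀ e ∈ E, Ignores F e ∨ Ignores F' e) :
    bernoulliExp p E (fun s => F s * F' s) = bernoulliExp p E F * bernoulliExp p E F' := by
  induction E using Finset.induction_on generalizing F F' with
  | empty => simp [bernoulliExp_empty]
  | insert e E he ih =>
    have h' : ∀ a ∈ E, Ignores F a ∨ Ignores F' a :=
      fun a ha => h a (Finset.mem_insert_of_mem ha)
    simp only [bernoulliExp_insert p he]
    rw [ih F F' h']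
    rcases h e (Finset.mem_insert_self e E) with h1 | h1
    · have h2 : ∀ s, F (insert e s) = F s := h1
      simp only [h2]
      rw [ih F (fun s => F' (insert e s))
        fun a ha => (h' a ha).imp id fun h3 => h3.insert_fixed e]
      ring
    · have h2 : ∀ s, F' (insert e s) = F' s := h1
      simp only [h2]
      rw [ih (fun s => F (insert e s)) F'
        fun a ha => (h' a ha).imp (fun h3 => h3.insert_fixed e) id]
      ring

lemma bernoulliExp_prod {ι : Type} [DecidableEq ι] (p : ℝ) (E : Finset α) (I : Finset ι)
    (F : ι → Finset α → ℝ)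
    (h : ∀ e ∈ E, ∀ i ∈ I, ∀ j ∈ I, i ≠ j → Ignores (F i) e ∨ Ignores (F j) e) :
    bernoulliExp p E (fun s => ∏ i ∈ I, F i s) = ∏ i ∈ I, bernoulliExp p E (F i) := by
  induction I using Finset.induction_on with
  | empty => simp [bernoulliExp_const]
  | insert i I hi ih =>
    simp only [Finset.prod_insert hi]
    rw [bernoulliExp_mul, ih]
    · exact fun e he a ha b hb => h e he a (Finset.mem_insert_of_mem ha) b
        (Finset.mem_insert_of_mem hb)
    · intro e he
      by_cases hie : Ignores (F i) e
      · exact Or.inl hie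
      · refine Or.inr fun s => Finset.prod_congr rfl fun j hj => ?_
        have hij : i ≠ j := fun h => hi (h ▸ hj)
        exact (h e he i (Finset.mem_insert_self _ _) j (Finset.mem_insert_of_mem hj)
          hij).resolve_left hie s

lemma bernoulliExp_mem (p : ℝ) {E : Finset α} {e : α} (he : e ∈ E) :
    bernoulliExp p E (fun s => if e ∈ s then 1 else 0) = p := by
  rw [← Finset.insert_erase he, bernoulliExp_insert p (Finset.notMem_erase e E)]
  have h0 : bernoulliExp p (E.erase e) (fun s => if e ∈ s then (1 : ℝ) else 0) = 0 := by
    rw [bernoulliExp_congr (F' := fun _ => 0), bernoulliExp_const]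
    intro s hs
    rw [if_neg fun h => Finset.notMem_erase e E (hs h)]
  simp [h0, bernoulliExp_const]

lemma ignores_mem {e a : α} (h : e ≠ a) :
    Ignores (fun s : Finset α => if a ∈ s then (1 : ℝ) else 0) e := fun s => by
  simp [Finset.mem_insert, h.symm]

lemma bernoulliExp_subset (p : ℝ) {E T : Finset α} (hT : T ⊆ E) :
    bernoulliExp p E (fun s => if T ⊆ s then 1 else 0) = p ^ T.card := by
  have h1 : ∀ s : Finset α, (if T ⊆ s then (1 : ℝ) else 0)
      = ∏ e ∈ T, if e ∈ s then (1 : ℝ) else 0 := by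
    intro s
    rw [Finset.prod_ite_zero]
    simp [Finset.subset_iff]
  simp only [h1]
  rw [bernoulliExp_prod, Finset.prod_congr rfl fun e he => bernoulliExp_mem p (hT he)]
  · simp
  · intro e _ i _ j _ hij
    by_cases h : e = i
    · exact Or.inr (ignores_mem (h ▸ hij))
    · exact Or.inl (ignores_mem h)

/-- Probability that a random subset contains none of `m` disjoint small sets. -/
lemma bernoulliExp_avoid_le {p : ℝ} (h0 : 0 ≤ p) (h1 : p ≤ 1) {E : Finset α} (m L : ℕ)
    (T : ℕ → Finset α) (hT : ∀ i < m, T i ⊆ E ∧ (T i).card ≤ L)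
    (hd : ∀ i < m, ∀ j < m, i ≠ j → Disjoint (T i) (T j)) :
    bernoulliExp p E (fun s => if ∀ i < m, ¬ T i ⊆ s then 1 else 0) ≤ (1 - p ^ L) ^ m := by
  have e1 : ∀ s : Finset α, (if ∀ i < m, ¬ T i ⊆ s then (1 : ℝ) else 0)
      = ∏ i ∈ Finset.range m, (1 - if T i ⊆ s then (1 : ℝ) else 0) := by
    intro s
    have : ∀ i, (1 - if T i ⊆ s then (1 : ℝ) else 0) = if ¬ T i ⊆ s then 1 else 0 := by
      intro i; by_cases h : T i ⊆ s <;> simp [h]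
    simp only [this]
    rw [Finset.prod_ite_zero]
    simp
  simp only [e1]
  rw [bernoulliExp_prod]
  · calc _ ≤ ∏ i ∈ Finset.range m, (1 - p ^ L) := by
          refine Finset.prod_le_prod (fun i hi => ?_) fun i hi => ?_ <;>
          rw [bernoulliExp_one_sub, bernoulliExp_subset p (hT i (Finset.mem_range.1 hi)).1]
          · have := pow_le_one₀ h0 h1 (n := (T i).card)
            linarith
          · have := pow_le_pow_of_le_one h0 h1 (hT i (Finset.mem_range.1 hi)).2
            linarith
      _ = _ := by simp
  · intro e _ i hi j hj hij
    have key : ∀ k, e ∉ T k → Ignores (fun s => (1 : ℝ) - if T k ⊆ s then 1 else 0) e := by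
      intro k hk s
      simp only [Finset.subset_insert_iff_of_notMem hk]
    by_cases h : e ∈ T i
    · exact Or.inr (key j (Finset.disjoint_left.1
        (hd i (Finset.mem_range.1 hi) j (Finset.mem_range.1 hj) hij) h))
    · exact Or.inl (key i h)

lemma two_point_exp_le {p a b C : ℝ} (h0 : 0 ≤ p) (h1 : p ≤ 1) (hab : |b - a| ≤ C) (hC : C ≤ 1) :
    (1 - p) * Real.exp a + p * Real.exp b ≤ Real.exp ((1 - p) * a + p * b + C ^ 2) := by
  have key : ∀ x : ℝ, |x| ≤ C → Real.exp x ≤ 1 + x + C ^ 2 := by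
    intro x hx
    have h := Real.abs_exp_sub_one_sub_id_le (hx.trans hC)
    have h2 : x ^ 2 ≤ C ^ 2 := by
      rw [← sq_abs]; exact pow_le_pow_left₀ (abs_nonneg x) hx 2
    have := (abs_le.1 h).2
    linarith
  set u := (1 - p) * a + p * b with hu
  have ea : Real.exp a = Real.exp u * Real.exp (p * (a - b)) := by
    rw [← Real.exp_add]; congr 1; rw [hu]; ring
  have eb : Real.exp b = Real.exp u * Real.exp ((1 - p) * (b - a)) := by
    rw [← Real.exp_add]; congr 1; rw [hu]; ring
  have ka := key (p * (a - b)) (by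
    rw [abs_mul, abs_of_nonneg h0, abs_sub_comm]
    nlinarith [abs_nonneg (b - a)])
  have kb := key ((1 - p) * (b - a)) (by
    rw [abs_mul, abs_of_nonneg (by linarith)]
    nlinarith [abs_nonneg (b - a)])
  rw [Real.exp_add, ea, eb]
  have hsum : (1 - p) * Real.exp (p * (a - b)) + p * Real.exp ((1 - p) * (b - a)) ≤ 1 + C ^ 2 := by
    have := mul_le_mul_of_nonneg_left ka (by linarith : 0 ≤ 1 - p)
    have := mul_le_mul_of_nonneg_left kb h0
    nlinarith
  have h3 : 1 + C ^ 2 ≤ Real.exp (C ^ 2) := by linarith [Real.add_one_le_exp (C ^ 2)]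
  have := mul_le_mul_of_nonneg_left (hsum.trans h3) (Real.exp_pos u).le
  linarith

lemma bernoulliExp_exp_le {p C : ℝ} (h0 : 0 ≤ p) (h1 : p ≤ 1) (hC : C ≤ 1) (E : Finset α)
    (f : Finset α → ℝ) (hf : ∀ e ∈ E, ∀ s, |f (insert e s) - f s| ≤ C) :
    bernoulliExp p E (fun s => Real.exp (f s))
      ≤ Real.exp (bernoulliExp p E f + C ^ 2 * E.card) := by
  induction E using Finset.induction_on generalizing f with
  | empty => simp [bernoulliExp_empty]
  | insert e E he ih =>
    rw [bernoulliExp_insert p he]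
    set g : Finset α → ℝ := fun s => (1 - p) * f s + p * f (insert e s) + C ^ 2 with hg
    have hg1 : ∀ a ∈ E, ∀ s, |g (insert a s) - g s| ≤ C := by
      intro a ha s
      have e1 : g (insert a s) - g s = (1 - p) * (f (insert a s) - f s)
          + p * (f (insert a (insert e s)) - f (insert e s)) := by
        simp only [hg]; rw [Finset.insert_comm]; ring
      have b1 := hf a (Finset.mem_insert_of_mem ha) s
      have b2 := hf a (Finset.mem_insert_of_mem ha) (insert e s)
      rw [e1]
      rw [abs_le] at b1 b2 ⊢
      constructor <;> nlinarith
    have hexp : bernoulliExp p E g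
        = bernoulliExp p (insert e E) f + C ^ 2 := by
      rw [bernoulliExp_insert p he]
      simp only [hg]
      rw [bernoulliExp_add, bernoulliExp_add, bernoulliExp_const_mul, bernoulliExp_const_mul,
        bernoulliExp_const]
    calc _ = bernoulliExp p E (fun s => (1 - p) * Real.exp (f s)
          + p * Real.exp (f (insert e s))) := by
          rw [bernoulliExp_add, bernoulliExp_const_mul, bernoulliExp_const_mul]
      _ ≤ bernoulliExp p E (fun s => Real.exp (g s)) :=
          bernoulliExp_mono h0 h1 fun s _ =>
            two_point_exp_le h0 h1 (hf e (Finset.mem_insert_self e E) s) hC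
      _ ≤ _ := ih g hg1
      _ = _ := by
          rw [hexp, Finset.card_insert_of_notMem he]
          congr 1; push_cast; ring

/-- Bounded-differences concentration for functions of a Bernoulli random subset. -/
lemma bernoulliExp_deviation_le {p C : ℝ} (h0 : 0 ≤ p) (h1 : p ≤ 1) {E : Finset α}
    (f : Finset α → ℝ) (hf : ∀ e ∈ E, ∀ s, |f (insert e s) - f s| ≤ C) {l : ℝ} (hl : 0 ≤ l)
    (hlC : l * C ≤ 1) (a : ℝ) :
    bernoulliExp p E (fun s => if bernoulliExp p E f + a ≤ f s then 1 else 0)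
      ≤ Real.exp (- l * a + (l * C) ^ 2 * E.card) := by
  set μ := bernoulliExp p E f
  have h2 := bernoulliExp_exp_le h0 h1 hlC E (fun s => l * f s) (fun e he s => by
    rw [← mul_sub, abs_mul, abs_of_nonneg hl]
    exact mul_le_mul_of_nonneg_left (hf e he s) hl)
  rw [bernoulliExp_const_mul] at h2
  calc _ ≤ bernoulliExp p E (fun s => Real.exp (-l * (μ + a)) * Real.exp (l * f s)) := by
        refine bernoulliExp_mono h0 h1 fun s _ => ?_
        rw [← Real.exp_add]
        split_ifs with h
        · apply Real.one_le_exp; nlinarith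
        · exact (Real.exp_pos _).le
    _ ≤ Real.exp (-l * (μ + a)) * Real.exp (l * μ + (l * C) ^ 2 * E.card) := by
        rw [bernoulliExp_const_mul]
        exact mul_le_mul_of_nonneg_left h2 (Real.exp_pos _).le
    _ = _ := by rw [← Real.exp_add]; congr 1; ring

end BernoulliExp

section BranchSurvival

/-- Probability that a branch of the `(m+1)`-regular tree survives bond percolation to
depth `r`. -/
def branchProb (m : ℕ) (p : ℝ) : ℕ → ℝ
  | 0 => 1
  | r + 1 => 1 - (1 - p * branchProb m p r) ^ m

lemma branchProb_mem {p : ℝ} (h0 : 0 ≤ p) (h1 : p ≤ 1) (m r : ℕ) :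
    0 ≤ branchProb m p r ∧ branchProb m p r ≤ 1 := by
  induction r with
  | zero => simp [branchProb]
  | succ r ih =>
    have h2 : 0 ≤ 1 - p * branchProb m p r := by nlinarith
    have h3 : 1 - p * branchProb m p r ≤ 1 := by nlinarith [mul_nonneg h0 ih.1]
    have h4 := pow_le_one₀ (n := m) h2 h3
    have h5 := pow_nonneg h2 m
    simp only [branchProb]
    constructor <;> linarith

lemma branch_step_mono {p x y : ℝ} (h0 : 0 ≤ p) (h1 : p ≤ 1) (m : ℕ) (hxy : x ≤ y) (hy : y ≤ 1) :
    1 - (1 - p * x) ^ m ≤ 1 - (1 - p * y) ^ m := by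
  have h2 : 0 ≤ 1 - p * y := by nlinarith
  have h3 : 1 - p * y ≤ 1 - p * x := by nlinarith
  have := pow_le_pow_left₀ h2 h3 m
  linarith

lemma branchProb_antitone {p : ℝ} (h0 : 0 ≤ p) (h1 : p ≤ 1) (m : ℕ) :
    Antitone (branchProb m p) := by
  refine antitone_nat_of_succ_le fun r => ?_
  induction r with
  | zero => exact (branchProb_mem h0 h1 m 1).2
  | succ r ih => exact branch_step_mono h0 h1 m ih (branchProb_mem h0 h1 m r).2

lemma le_branchProb {p y : ℝ} (h0 : 0 ≤ p) (h1 : p ≤ 1) (m : ℕ) (hy1 : y ≤ 1)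
    (hy : y ≤ 1 - (1 - p * y) ^ m) (r : ℕ) : y ≤ branchProb m p r := by
  induction r with
  | zero => exact hy1
  | succ r ih => exact hy.trans (branch_step_mono h0 h1 m ih (branchProb_mem h0 h1 m r).2)

lemma lt_branch_step {m : ℕ} (hm : 2 ≤ m) {p x y : ℝ} (hp : 0 < p) (hp1 : p ≤ 1) (hy : 0 < y)
    (hyx : y < x) (hx1 : x ≤ 1) (hx : x = 1 - (1 - p * x) ^ m) : y < 1 - (1 - p * y) ^ m := by
  have hx0 : 0 < x := hy.trans hyx
  have hc := strictConvexOn_pow hm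
  have hpx : p * x ≤ 1 := by nlinarith
  have h := hc.2 (show (1 : ℝ) ∈ Set.Ici 0 by simp)
    (show 1 - p * x ∈ Set.Ici (0 : ℝ) from sub_nonneg.2 hpx)
    (by nlinarith [mul_pos hp hx0]) (show 0 < 1 - y / x by have := (div_lt_one hx0).2 hyx; linarith)
    (show 0 < y / x by positivity) (by ring)
  simp only [smul_eq_mul, one_pow] at h
  have e1 : (1 - y / x) * 1 + y / x * (1 - p * x) = 1 - p * y := by field_simp; ring
  have e2 : (1 - p * x) ^ m = 1 - x := by linarith
  have e3 : (1 - y / x) * 1 + y / x * (1 - x) = 1 - y := by field_simp; ring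
  rw [e1, e2, e3] at h
  linarith

/-- Left-continuity of the survival probability, uniformly in the depth. -/
lemma exists_branchProb_close {m : ℕ} (hm : 2 ≤ m) {p τ : ℝ} (hp : 0 < p) (hp1 : p < 1)
    (hτ : 0 < τ) : ∃ p', 0 < p' ∧ p' < p ∧ p - p' ≤ τ ∧
      ∃ r₀ : ℕ, ∀ r ≥ r₀, branchProb m p r - branchProb m p' r ≤ τ := by
  have hanti := branchProb_antitone hp.le hp1.le m
  have hbdd : BddBelow (Set.range (branchProb m p)) :=
    ⟨0, by rintro _ ⟨r, rfl⟩; exact (branchProb_mem hp.le hp1.le m r).1⟩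
  set X := ⨅ r, branchProb m p r with hX
  have hlim := tendsto_atTop_ciInf hanti hbdd
  rw [← hX] at hlim
  have hX0 : 0 ≤ X := le_ciInf fun r => (branchProb_mem hp.le hp1.le m r).1
  have hX1 : X ≤ 1 := ciInf_le hbdd 0
  have hfix : X = 1 - (1 - p * X) ^ m := by
    have h1 := hlim.comp (Filter.tendsto_add_atTop_nat 1)
    have h2 : Filter.Tendsto (fun r => 1 - (1 - p * branchProb m p r) ^ m) Filter.atTop
        (nhds (1 - (1 - p * X) ^ m)) :=
      (((hlim.const_mul p).const_sub 1).pow m).const_sub 1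
    exact tendsto_nhds_unique h1 h2
  obtain ⟨r₀, hr₀⟩ := Filter.eventually_atTop.1
    (hlim.eventually_le_const (show X < X + τ / 2 by linarith))
  rcases le_or_gt X (τ / 2) with hcase | hcase
  · refine ⟨max (p / 2) (p - τ), by positivity, by apply max_lt <;> linarith, by
      have := le_max_right (p / 2) (p - τ); linarith, r₀, fun r hr => ?_⟩
    have h1 : 0 ≤ max (p / 2) (p - τ) := by positivity
    have h2 : max (p / 2) (p - τ) ≤ 1 := by apply max_le <;> linarith
    have := (branchProb_mem h1 h2 m r).1
    have := hr₀ r hr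
    linarith
  · set y := X - τ / 2 with hy
    have hlt := lt_branch_step hm hp hp1.le (y := y) (by linarith) (by linarith) hX1 hfix
    have hcont : Continuous fun q : ℝ => 1 - (1 - q * y) ^ m := by fun_prop
    have hev := (hcont.tendsto p).eventually_const_lt hlt
    have hev2 : ∀ᶠ q in nhdsWithin p (Set.Iio p), y < 1 - (1 - q * y) ^ m :=
      hev.filter_mono nhdsWithin_le_nhds
    have hev3 : ∀ᶠ q in nhdsWithin p (Set.Iio p), max 0 (p - τ) < q :=
      (eventually_gt_nhds (by apply max_lt <;> linarith)).filter_mono nhdsWithin_le_nhds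
    obtain ⟨p', ⟨h1, h2⟩, h3⟩ := ((hev2.and hev3).and self_mem_nhdsWithin).exists
    have h4 : p' < p := h3
    have h5 := (le_max_left _ _).trans_lt h2
    have h6 := (le_max_right _ _).trans_lt h2
    refine ⟨p', h5, h4, by linarith, r₀, fun r hr => ?_⟩
    have := le_branchProb h5.le (by linarith) m (by linarith) h1.le r
    have := hr₀ r hr
    linarith

lemma pow_sub_pow_le_mul {a b : ℝ} (hb : 0 ≤ b) (hba : b ≤ a) (ha : a ≤ 1) (n : ℕ) :
    a ^ n - b ^ n ≤ n * (a - b) := by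
  induction n with
  | zero => simp
  | succ n ih =>
    have h1 : a ^ (n + 1) - b ^ (n + 1) = a * (a ^ n - b ^ n) + b ^ n * (a - b) := by ring
    have h2 : b ^ n ≤ 1 := pow_le_one₀ hb (hba.trans ha)
    have h3 : b ^ n ≤ a ^ n := pow_le_pow_left₀ hb hba n
    rw [h1]; push_cast
    nlinarith

/-- Probability that the root of the `d`-regular tree is joined to depth `r + 1`. -/
def rootProb (d : ℕ) (p : ℝ) (r : ℕ) : ℝ := 1 - (1 - p * branchProb (d - 1) p r) ^ d

lemma exists_rootProb_close {d : ℕ} (hd : 3 ≤ d) {p τ : ℝ} (hp : 0 < p) (hp1 : p < 1)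
    (hτ : 0 < τ) : ∃ p', 0 < p' ∧ p' < p ∧
      ∃ r₀ : ℕ, ∀ r ≥ r₀, rootProb d p r - rootProb d p' r ≤ τ := by
  have hd0 : (0 : ℝ) < d := by exact_mod_cast (by omega : 0 < d)
  obtain ⟨p', h0, h1, h2, r₀, h3⟩ := exists_branchProb_close (m := d - 1) (by omega) hp hp1
    (show 0 < τ / (2 * d) by positivity)
  refine ⟨p', h0, h1, r₀, fun r hr => ?_⟩
  have h4 := h3 r hr
  obtain ⟨a0, a1⟩ := branchProb_mem hp.le hp1.le (d - 1) r
  obtain ⟨b0, b1⟩ := branchProb_mem h0.le (h1.le.trans hp1.le) (d - 1) r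
  unfold rootProb
  set x := branchProb (d - 1) p r
  set x' := branchProb (d - 1) p' r
  have hτ' : (d : ℝ) * (τ / (2 * d)) = τ / 2 := by field_simp
  rcases le_total (p * x) (p' * x') with h | h
  · have := pow_le_pow_left₀ (show 0 ≤ 1 - p' * x' by nlinarith)
      (show 1 - p' * x' ≤ 1 - p * x by linarith) d
    linarith
  · have := pow_sub_pow_le_mul (show 0 ≤ 1 - p * x by nlinarith)
      (show 1 - p * x ≤ 1 - p' * x' by linarith) (by nlinarith [mul_nonneg h0.le b0]) d
    have h5 : p * x - p' * x' ≤ 2 * (τ / (2 * d)) := by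
      have : p * x - p' * x' = (p - p') * x + p' * (x - x') := by ring
      have h6 : (p - p') * x ≤ τ / (2 * d) := by nlinarith
      have h7 : p' * (x - x') ≤ τ / (2 * d) := by
        have : 0 < τ / (2 * d) := by positivity
        nlinarith
      linarith
    nlinarith

end BranchSurvival

section Branching

lemma girth_le_of_adj_of_dist_le {G : SimpleGraph V} {ρ u v w : V} (huv : G.Adj u v)
    (hwv : G.Adj w v) (huw : u ≠ w) (hu : G.Reachable ρ u) (hw : G.Reachable ρ w)
    (hdu : G.dist ρ u ≤ G.dist ρ v) (hdw : G.dist ρ w ≤ G.dist ρ v) :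
    G.girth ≤ G.dist ρ u + G.dist ρ w + 2 := by
  have key : ∀ x, G.Adj x v → G.Reachable ρ x → G.dist ρ x ≤ G.dist ρ v →
      ∃ q : G.Walk ρ x, q.length = G.dist ρ x ∧ v ∉ q.support := by
    intro x hxv hx hd
    obtain ⟨q, hq⟩ := hx.exists_walk_length_eq_dist
    refine ⟨q, hq, fun hv => ?_⟩
    have h1 := SimpleGraph.Walk.length_takeUntil_lt_length hv hxv.ne'
    have h2 := SimpleGraph.dist_le (q.takeUntil v hv)
    omega
  obtain ⟨q₁, hl₁, hv₁⟩ := key u huv hu hdu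
  obtain ⟨q₂, hl₂, hv₂⟩ := key w hwv hw hdw
  set q := (q₁.reverse.append q₂).concat hwv with hq
  have hlen : q.length = G.dist ρ u + G.dist ρ w + 1 := by
    simp [hq, hl₁, hl₂]
  have hedge : s(v, u) ∉ q.edges := by
    intro h
    rw [hq, SimpleGraph.Walk.edges_concat, List.concat_eq_append, List.mem_append] at h
    rcases h with h | h
    · have h2 := SimpleGraph.Walk.fst_mem_support_of_mem_edges _ h
      rw [SimpleGraph.Walk.mem_support_append_iff] at h2
      simp [hv₁, hv₂] at h2
    · rw [List.mem_singleton, Sym2.eq_swap, Sym2.congr_left] at h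
      exact huw h
  have hc : (SimpleGraph.Walk.cons huv.symm q.bypass).IsCycle := by
    rw [SimpleGraph.Walk.cons_isCycle_iff]
    exact ⟨q.bypass_isPath, fun h => hedge (q.edges_bypass_subset_edges h)⟩
  have h1 := SimpleGraph.egirth_le_length hc
  have h2 : G.girth ≤ (SimpleGraph.Walk.cons huv.symm q.bypass).length :=
    ENat.toNat_le_of_le_natCast h1
  rw [SimpleGraph.Walk.length_cons] at h2
  have := q.length_bypass_le_length
  omega

/-- Some walk of length `r` from `v` using edges of `G` in `s` never backtracks and does not
step to `u` first. -/
def Descends (G : SimpleGraph V) (s : Finset (Sym2 V)) : ℕ → V → V → Prop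
  | 0, _, _ => True
  | r + 1, u, v => ∃ w, G.Adj v w ∧ w ≠ u ∧ s(v, w) ∈ s ∧ Descends G s r v w

/-- The edge `e` lies on a walk considered in `Descends G _ r u v`. -/
def Influences (G : SimpleGraph V) (e : Sym2 V) : ℕ → V → V → Prop
  | 0, _, _ => False
  | r + 1, u, v => ∃ w, G.Adj v w ∧ w ≠ u ∧ (e = s(v, w) ∨ Influences G e r v w)

lemma Descends.mono {G : SimpleGraph V} {s t : Finset (Sym2 V)} (hst : s ⊆ t) {r : ℕ} {u v : V}
    (h : Descends G s r u v) : Descends G t r u v := by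
  induction r generalizing u v with
  | zero => trivial
  | succ r ih =>
    obtain ⟨w, h1, h2, h3, h4⟩ := h
    exact ⟨w, h1, h2, hst h3, ih h4⟩

lemma descends_insert_iff {G : SimpleGraph V} {e : Sym2 V} (s : Finset (Sym2 V)) {r : ℕ} {u v : V}
    (h : ¬ Influences G e r u v) : Descends G (insert e s) r u v ↔ Descends G s r u v := by
  induction r generalizing u v with
  | zero => rfl
  | succ r ih =>
    refine exists_congr fun w => and_congr_right fun h1 => and_congr_right fun h2 => ?_
    have h3 : e ≠ s(v, w) := fun h3 => h ⟨w, h1, h2, Or.inl h3⟩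
    rw [ih fun h4 => h ⟨w, h1, h2, Or.inr h4⟩, Finset.mem_insert, or_iff_right h3.symm]

/-- The vertex `v` is at distance `k` from the root `ρ` with predecessor `u`
(with `u = v` at the root). -/
def AtLevel (G : SimpleGraph V) (ρ : V) (k : ℕ) (u v : V) : Prop :=
  G.Reachable ρ v ∧ G.dist ρ v = k ∧
    ((k = 0 ∧ u = v) ∨ (G.Adj u v ∧ G.Reachable ρ u ∧ G.dist ρ u + 1 = k))

variable {G : SimpleGraph V} {ρ : V} {R : ℕ}

lemma atLevel_root : AtLevel G ρ 0 ρ ρ := ⟨.refl _, by simp, Or.inl ⟨rfl, rfl⟩⟩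

lemma AtLevel.step (hg : 2 * R < G.girth) {k : ℕ} {u v w : V} (h : AtLevel G ρ k u v)
    (hk : k < R) (hvw : G.Adj v w) (hwu : w ≠ u) : AtLevel G ρ (k + 1) v w := by
  obtain ⟨h1, h2, h3⟩ := h
  have hw : G.Reachable ρ w := h1.trans hvw.reachable
  refine ⟨hw, ?_, Or.inr ⟨hvw, h1, by omega⟩⟩
  have hub : G.dist ρ w ≤ k + 1 := by
    obtain ⟨q, hq⟩ := h1.exists_walk_length_eq_dist
    have := SimpleGraph.dist_le (q.concat hvw)
    rw [SimpleGraph.Walk.length_concat] at this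
    omega
  by_contra hne
  rcases h3 with ⟨h0, rfl⟩ | ⟨huv, hu, hdu⟩
  · have h4 : u = ρ := ((h1.dist_eq_zero_iff).1 (by omega)).symm
    have h5 : w = ρ := ((hw.dist_eq_zero_iff).1 (by omega)).symm
    exact hwu (h5.trans h4.symm)
  · have := girth_le_of_adj_of_dist_le huv hvw.symm hwu.symm hu hw (by omega) (by omega)
    omega

lemma Influences.le_dist (hg : 2 * R < G.girth) {e : Sym2 V} {r k : ℕ} {u v : V}
    (h : AtLevel G ρ k u v) (hk : k + r ≤ R) (he : Influences G e r u v) :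
    ∀ x ∈ e, k ≤ G.dist ρ x := by
  induction r generalizing u v k with
  | zero => exact he.elim
  | succ r ih =>
    obtain ⟨w, h1, h2, h3⟩ := he
    have hw := h.step hg (by omega) h1 h2
    rcases h3 with rfl | h3
    · intro x hx
      rcases Sym2.mem_iff.1 hx with rfl | rfl
      · exact h.2.1.ge
      · have := hw.2.1; omega
    · intro x hx
      have := ih hw (by omega) h3 x hx
      omega

lemma not_influences_of_ne (hg : 2 * R < G.girth) {e : Sym2 V} {r k : ℕ} {u v u' v' : V}
    (h : AtLevel G ρ k u v) (h' : AtLevel G ρ k u' v') (hne : v ≠ v') (hk : k + r ≤ R)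
    (he : Influences G e r u v) : ¬ Influences G e r u' v' := by
  induction r generalizing u v u' v' k with
  | zero => exact he.elim
  | succ r ih =>
    rintro ⟨w', h1', h2', h3'⟩
    obtain ⟨w, h1, h2, h3⟩ := he
    have hw := h.step hg (by omega) h1 h2
    have hw' := h'.step hg (by omega) h1' h2'
    rcases h3 with h3 | h3 <;> rcases h3' with h3' | h3'
    · have hv : v ∈ s(v', w') := by rw [← h3', h3]; simp
      rcases Sym2.mem_iff.1 hv with hv | hv
      · exact hne hv
      · have := h.2.1; have := hw'.2.1; rw [hv] at *; omega
    · have := Influences.le_dist hg hw' (by omega) h3' v (by rw [h3]; simp)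
      have := h.2.1; omega
    · have := Influences.le_dist hg hw (by omega) h3 v' (by rw [h3']; simp)
      have := h'.2.1; omega
    · refine ih hw hw' ?_ (by omega) h3 h3'
      rintro rfl
      have := girth_le_of_adj_of_dist_le h1 h1' hne h.1 h'.1
        (by rw [h.2.1, hw.2.1]; omega) (by rw [h'.2.1, hw.2.1]; omega)
      rw [h.2.1, h'.2.1] at this
      omega

lemma ignores_descends {e : Sym2 V} {r : ℕ} {u v : V} (h : ¬ Influences G e r u v) :
    Ignores (fun s => if Descends G s r u v then (1 : ℝ) else 0) e := fun s => by
  simp only [descends_insert_iff s h]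

lemma Ignores.mul {α : Type} [DecidableEq α] {F F' : Finset α → ℝ} {e : α} (h : Ignores F e)
    (h' : Ignores F' e) : Ignores (fun s => F s * F' s) e := fun s => by
  simp only [h s, h' s]

lemma mem_edgeFinset' {e : Sym2 V} : e ∈ edgeFinset' G ↔ e ∈ G.edgeSet := by
  simp [edgeFinset']

lemma bernoulliExp_descends_succ (hg : 2 * R < G.girth) {k r : ℕ} {u v : V}
    (h : AtLevel G ρ k u v) (hk : k + (r + 1) ≤ R) (p x : ℝ)
    (hx : ∀ w, G.Adj v w → w ≠ u → bernoulliExp p (edgeFinset' G)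
      (fun s => if Descends G s r v w then 1 else 0) = x) :
    bernoulliExp p (edgeFinset' G) (fun s => if Descends G s (r + 1) u v then 1 else 0)
      = 1 - (1 - p * x) ^ (Finset.univ.filter fun w => G.Adj v w ∧ w ≠ u).card := by
  set N := Finset.univ.filter fun w => G.Adj v w ∧ w ≠ u with hN
  have hmemN : ∀ w, w ∈ N ↔ G.Adj v w ∧ w ≠ u := by simp [hN]
  let Q : V → Finset (Sym2 V) → ℝ := fun w s =>
    (if s(v, w) ∈ s then 1 else 0) * (if Descends G s r v w then 1 else 0)
  have hrep : ∀ s, (if Descends G s (r + 1) u v then (1 : ℝ) else 0)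
      = 1 - ∏ w ∈ N, (1 - Q w s) := by
    intro s
    have hQ : ∀ w, 1 - Q w s = if ¬ (s(v, w) ∈ s ∧ Descends G s r v w) then 1 else 0 := by
      intro w
      by_cases h1 : s(v, w) ∈ s <;> by_cases h2 : Descends G s r v w <;> simp [Q, h1, h2]
    simp only [hQ]
    rw [Finset.prod_ite_zero]
    by_cases hD : Descends G s (r + 1) u v
    · obtain ⟨w, h1, h2, h3, h4⟩ := id hD
      rw [if_pos hD, if_neg, sub_zero]
      exact fun hall => hall w ((hmemN w).2 ⟨h1, h2⟩) ⟨h3, h4⟩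
    · rw [if_neg hD, if_pos]
      · simp
      · exact fun w hw hc => hD ⟨w, ((hmemN w).1 hw).1, ((hmemN w).1 hw).2, hc.1, hc.2⟩
  have hlev : ∀ w ∈ N, AtLevel G ρ (k + 1) v w := fun w hw =>
    h.step hg (by omega) ((hmemN w).1 hw).1 ((hmemN w).1 hw).2
  have hroot : ∀ w ∈ N, ∀ w' , ¬ Influences G s(v, w') r v w := by
    intro w hw w' hc
    have := Influences.le_dist hg (hlev w hw) (by omega) hc v (by simp)
    have := h.2.1
    omega
  have hQexp : ∀ w ∈ N, bernoulliExp p (edgeFinset' G) (fun s => 1 - Q w s) = 1 - p * x := by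
    intro w hw
    rw [bernoulliExp_one_sub, bernoulliExp_mul, hx w ((hmemN w).1 hw).1 ((hmemN w).1 hw).2,
      bernoulliExp_mem p (mem_edgeFinset'.2 ((hmemN w).1 hw).1)]
    intro e _
    by_cases he : e = s(v, w)
    · exact Or.inr (ignores_descends (he ▸ hroot w hw w))
    · exact Or.inl (ignores_mem he)
  simp only [hrep]
  rw [bernoulliExp_one_sub, bernoulliExp_prod, Finset.prod_congr rfl hQexp, Finset.prod_const]
  intro e _ w hw w' hw' hne
  have hign : ∀ z, e ≠ s(v, z) → ¬ Influences G e r v z → Ignores (fun s => 1 - Q z s) e :=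
    fun z h1 h2 => ((ignores_mem h1).mul (ignores_descends h2)).comp fun y => 1 - y
  by_cases h1 : e = s(v, w)
  · refine Or.inr (hign w' ?_ (h1 ▸ hroot w' hw' w))
    rw [h1, Ne, Sym2.congr_right]
    exact hne
  · by_cases h2 : Influences G e r v w
    · refine Or.inr (hign w' ?_ (not_influences_of_ne hg (hlev w hw) (hlev w' hw') hne
        (by omega) h2))
      rintro rfl
      exact hroot w hw w' h2
    · exact Or.inl (hign w h1 h2)

lemma card_filter_adj_ne {d : ℕ} (hreg : ∀ v, (G.neighborSet v).ncard = d) (v : V) :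
    (Finset.univ.filter fun w => G.Adj v w ∧ w ≠ v).card = d := by
  rw [← hreg v, Set.ncard_eq_toFinset_card']
  congr 1
  ext w
  simp only [Finset.mem_filter, Finset.mem_univ, true_and, Set.mem_toFinset,
    SimpleGraph.mem_neighborSet, and_iff_left_iff_imp]
  exact fun h => h.ne'

lemma card_filter_adj_ne_of_adj {d : ℕ} (hreg : ∀ v, (G.neighborSet v).ncard = d) {u v : V}
    (huv : G.Adj u v) : (Finset.univ.filter fun w => G.Adj v w ∧ w ≠ u).card = d - 1 := by
  rw [← card_filter_adj_ne hreg v, ← Finset.card_erase_of_mem (a := u)]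
  · congr 1
    ext w
    simp only [Finset.mem_filter, Finset.mem_univ, true_and, Finset.mem_erase]
    exact ⟨fun h => ⟨h.2, h.1, h.1.ne'⟩, fun h => ⟨h.2.1, h.1⟩⟩
  · simpa using ⟨huv.symm, huv.ne⟩

lemma bernoulliExp_descends (hg : 2 * R < G.girth) {d : ℕ}
    (hreg : ∀ v, (G.neighborSet v).ncard = d) (p : ℝ) {k r : ℕ} {u v : V}
    (h : AtLevel G ρ (k + 1) u v) (hk : k + 1 + r ≤ R) :
    bernoulliExp p (edgeFinset' G) (fun s => if Descends G s r u v then 1 else 0)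
      = branchProb (d - 1) p r := by
  induction r generalizing k u v with
  | zero => simp [Descends, branchProb, bernoulliExp_const]
  | succ r ih =>
    rw [bernoulliExp_descends_succ hg h (by omega) p (branchProb (d - 1) p r)
      fun w h1 h2 => ih (h.step hg (by omega) h1 h2) (by omega)]
    rcases h.2.2 with h3 | h3
    · omega
    · rw [card_filter_adj_ne_of_adj hreg h3.1, branchProb]

lemma bernoulliExp_descends_root {r d : ℕ} (hg : 2 * (r + 1) < G.girth)
    (hreg : ∀ v, (G.neighborSet v).ncard = d) (p : ℝ) (v : V) :
    bernoulliExp p (edgeFinset' G) (fun s => if Descends G s (r + 1) v v then 1 else 0)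
      = rootProb d p r := by
  rw [bernoulliExp_descends_succ hg atLevel_root (by omega) p (branchProb (d - 1) p r)
    fun w h1 h2 => bernoulliExp_descends hg hreg p
      (atLevel_root.step hg (by omega) h1 h2) (by omega), card_filter_adj_ne hreg, rootProb]

end Branching

section DescendSet

variable {G : SimpleGraph V}

/-- The vertices at distance at most `k` from `x`. -/
def vertexBall (G : SimpleGraph V) (x : V) : ℕ → Finset V
  | 0 => {x}
  | k + 1 => Finset.univ.filter fun v => v ∈ vertexBall G x k ∨ ∃ w ∈ vertexBall G x k, G.Adj w v

lemma card_filter_adj {d : ℕ} (hreg : ∀ v, (G.neighborSet v).ncard = d) (v : V) :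
    (Finset.univ.filter fun w => G.Adj v w).card = d := by
  rw [← hreg v, Set.ncard_eq_toFinset_card']
  congr 1
  ext w
  simp

lemma card_vertexBall_le {d : ℕ} (hreg : ∀ v, (G.neighborSet v).ncard = d) (x : V) (k : ℕ) :
    (vertexBall G x k).card ≤ (d + 1) ^ k := by
  induction k with
  | zero => simp [vertexBall]
  | succ k ih =>
    have hsub : vertexBall G x (k + 1) ⊆ (vertexBall G x k).biUnion
        fun w => insert w (Finset.univ.filter fun v => G.Adj w v) := by
      intro v hv
      simp only [vertexBall, Finset.mem_filter, Finset.mem_univ, true_and] at hv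
      simp only [Finset.mem_biUnion, Finset.mem_insert, Finset.mem_filter, Finset.mem_univ,
        true_and]
      rcases hv with hv | ⟨w, hw, hwv⟩
      · exact ⟨v, hv, Or.inl rfl⟩
      · exact ⟨w, hw, Or.inr hwv⟩
    calc _ ≤ _ := Finset.card_le_card hsub
      _ ≤ (vertexBall G x k).card * (d + 1) := by
          refine Finset.card_biUnion_le_card_mul _ _ _ fun w _ => ?_
          exact (Finset.card_insert_le _ _).trans (by rw [card_filter_adj hreg])
      _ ≤ _ := by rw [pow_succ]; exact Nat.mul_le_mul_right _ ih

lemma mem_vertexBall_succ {x w v : V} {k : ℕ} (hw : w ∈ vertexBall G x k) (h : G.Adj w v) :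
    v ∈ vertexBall G x (k + 1) := by
  simp only [vertexBall, Finset.mem_filter, Finset.mem_univ, true_and]
  exact Or.inr ⟨w, hw, h⟩

lemma self_mem_vertexBall (x : V) (k : ℕ) : x ∈ vertexBall G x k := by
  induction k with
  | zero => simp [vertexBall]
  | succ k ih => simp [vertexBall, ih]

lemma mem_vertexBall_of_walk {x v : V} (q : G.Walk v x) {k : ℕ} (hq : q.length ≤ k) :
    v ∈ vertexBall G x k := by
  induction q generalizing k with
  | nil => exact self_mem_vertexBall _ _
  | cons h q ih =>
    rw [SimpleGraph.Walk.length_cons] at hq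
    obtain ⟨k, rfl⟩ : ∃ j, k = j + 1 := ⟨k - 1, by omega⟩
    exact mem_vertexBall_succ (ih (by omega)) h.symm

lemma Influences.mem_vertexBall {e : Sym2 V} {r : ℕ} {u v : V} (h : Influences G e r u v) :
    ∃ z ∈ e, v ∈ vertexBall G z r := by
  induction r generalizing u v with
  | zero => exact h.elim
  | succ r ih =>
    obtain ⟨w, h1, -, rfl | h3⟩ := h
    · exact ⟨v, by simp, self_mem_vertexBall _ _⟩
    · obtain ⟨z, hz, hw⟩ := ih h3
      exact ⟨z, hz, mem_vertexBall_succ hw h1.symm⟩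

/-- The vertices from which a non-backtracking walk of length `R` in `s` starts. -/
def descendSet (G : SimpleGraph V) (R : ℕ) (s : Finset (Sym2 V)) : Finset V :=
  Finset.univ.filter fun v => Descends G s R v v

lemma mem_descendSet {R : ℕ} {s : Finset (Sym2 V)} {v : V} :
    v ∈ descendSet G R s ↔ Descends G s R v v := by simp [descendSet]

lemma descendSet_mono {R : ℕ} {s t : Finset (Sym2 V)} (h : s ⊆ t) :
    descendSet G R s ⊆ descendSet G R t := fun _ hv =>
  mem_descendSet.2 ((mem_descendSet.1 hv).mono h)

lemma abs_card_descendSet_insert_sub_le {d : ℕ} (hreg : ∀ v, (G.neighborSet v).ncard = d) (R : ℕ)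
    (e : Sym2 V) (s : Finset (Sym2 V)) :
    |((descendSet G R (insert e s)).card : ℝ) - (descendSet G R s).card| ≤ 2 * (d + 1) ^ R := by
  have hmono : descendSet G R s ⊆ descendSet G R (insert e s) :=
    descendSet_mono (Finset.subset_insert e s)
  have hcard := Finset.card_sdiff_add_card_eq_card hmono
  have hdiff : (descendSet G R (insert e s) \ descendSet G R s).card ≤ 2 * (d + 1) ^ R := by
    induction e using Sym2.ind with
    | _ x y =>
    have hsub : descendSet G R (insert s(x, y) s) \ descendSet G R s
        ⊆ vertexBall G x R ∪ vertexBall G y R := by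
      intro v hv
      rw [Finset.mem_sdiff, mem_descendSet, mem_descendSet] at hv
      have hinf : Influences G s(x, y) R v v := by
        by_contra hn
        exact hv.2 ((descends_insert_iff s hn).1 hv.1)
      obtain ⟨z, hz, hvz⟩ := hinf.mem_vertexBall
      rcases Sym2.mem_iff.1 hz with rfl | rfl
      · exact Finset.mem_union_left _ hvz
      · exact Finset.mem_union_right _ hvz
    calc _ ≤ _ := Finset.card_le_card hsub
      _ ≤ _ := Finset.card_union_le _ _
      _ ≤ (d + 1) ^ R + (d + 1) ^ R :=
          Nat.add_le_add (card_vertexBall_le hreg _ _) (card_vertexBall_le hreg _ _)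
      _ = _ := by ring
  have h1 : ((descendSet G R (insert e s)).card : ℝ) - (descendSet G R s).card
      = (descendSet G R (insert e s) \ descendSet G R s).card := by
    rw [← hcard]; push_cast; ring
  rw [h1, abs_of_nonneg (Nat.cast_nonneg _)]
  exact_mod_cast hdiff

lemma bernoulliExp_card_descendSet {r d : ℕ} (hg : 2 * (r + 1) < G.girth)
    (hreg : ∀ v, (G.neighborSet v).ncard = d) (p : ℝ) :
    bernoulliExp p (edgeFinset' G) (fun s => ((descendSet G (r + 1) s).card : ℝ))
      = Fintype.card V * rootProb d p r := by
  have h : ∀ s, ((descendSet G (r + 1) s).card : ℝ)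
      = ∑ v : V, if Descends G s (r + 1) v v then (1 : ℝ) else 0 := by
    intro s; simp [descendSet]
  simp only [h]
  rw [bernoulliExp_sum, Finset.sum_congr rfl fun v _ => bernoulliExp_descends_root hg hreg p v]
  simp

lemma card_edgeFinset'_le {d : ℕ} (hreg : ∀ v, (G.neighborSet v).ncard = d) :
    (edgeFinset' G).card ≤ Fintype.card V * d := by
  have hsub : edgeFinset' G ⊆ Finset.univ.biUnion
      fun v => (Finset.univ.filter fun w => G.Adj v w).image fun w => s(v, w) := by
    intro e he
    rw [mem_edgeFinset'] at he
    induction e using Sym2.ind with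
    | _ x y =>
    simp only [Finset.mem_biUnion, Finset.mem_univ, true_and, Finset.mem_image,
      Finset.mem_filter]
    exact ⟨x, y, he, rfl⟩
  refine (Finset.card_le_card hsub).trans ?_
  refine (Finset.card_biUnion_le_card_mul _ _ d fun v _ => ?_).trans (by simp)
  exact Finset.card_image_le.trans (card_filter_adj hreg v).le

/-- The connected component of `v` in the graph with edge set `s`. -/
def reachSet (s : Finset (Sym2 V)) (v : V) : Finset V :=
  Finset.univ.filter fun w => (SimpleGraph.fromEdgeSet (s : Set (Sym2 V))).Reachable v w

lemma mem_reachSet {s : Finset (Sym2 V)} {v w : V} :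
    w ∈ reachSet s v ↔ (SimpleGraph.fromEdgeSet (s : Set (Sym2 V))).Reachable v w := by
  simp [reachSet]

lemma fromEdgeSet_le {s : Finset (Sym2 V)} (hs : s ⊆ edgeFinset' G) :
    SimpleGraph.fromEdgeSet (s : Set (Sym2 V)) ≤ G := by
  intro x y h
  rw [SimpleGraph.fromEdgeSet_adj] at h
  exact mem_edgeFinset'.1 (hs h.1)

lemma descends_of_isPath {s : Finset (Sym2 V)} (hs : s ⊆ edgeFinset' G) {u v x : V}
    (q : (SimpleGraph.fromEdgeSet (s : Set (Sym2 V))).Walk v x) (hq : q.IsPath)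
    (hu : ∀ w ∈ q.support.tail, w ≠ u) {r : ℕ} (hr : r ≤ q.length) : Descends G s r u v := by
  induction q generalizing u r with
  | nil =>
    obtain rfl : r = 0 := by simpa using hr
    trivial
  | cons h q ih =>
    rename_i a c _
    cases r with
    | zero => trivial
    | succ r =>
      rw [SimpleGraph.Walk.cons_isPath_iff] at hq
      rw [SimpleGraph.Walk.length_cons] at hr
      rw [SimpleGraph.Walk.support_cons, List.tail_cons] at hu
      refine ⟨c, fromEdgeSet_le hs h, hu c q.start_mem_support,
        ((SimpleGraph.fromEdgeSet_adj _).1 h).1, ih hq.1 (fun w hw hwa => ?_) (by omega)⟩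
      exact hq.2 (hwa ▸ List.mem_of_mem_tail hw)

lemma card_reachSet_le_of_not_descends {d : ℕ} (hreg : ∀ v, (G.neighborSet v).ncard = d)
    {s : Finset (Sym2 V)} (hs : s ⊆ edgeFinset' G) {R : ℕ} {v : V}
    (h : v ∉ descendSet G R s) : (reachSet s v).card ≤ (d + 1) ^ R := by
  refine (Finset.card_le_card fun w hw => ?_).trans (card_vertexBall_le hreg v R)
  obtain ⟨q, hq⟩ := (mem_reachSet.1 hw).exists_isPath
  have hlen : q.length < R := by
    by_contra hlt
    refine h (mem_descendSet.2 (descends_of_isPath hs q hq (fun w hw => ?_) (not_lt.1 hlt)))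
    rintro rfl
    have := hq.support_nodup
    rw [← SimpleGraph.Walk.cons_tail_support] at this
    exact (List.nodup_cons.1 this).1 hw
  refine mem_vertexBall_of_walk (q.mapLe (fromEdgeSet_le hs)).reverse (k := R) ?_
  simpa using hlen.le

lemma Descends.exists_dist {R : ℕ} (hg : 2 * R < G.girth) {s : Finset (Sym2 V)} {ρ : V}
    {k r : ℕ} {u v : V} (hl : AtLevel G ρ k u v) (hk : k + r ≤ R) (h : Descends G s r u v) :
    ∃ x, (SimpleGraph.fromEdgeSet (s : Set (Sym2 V))).Reachable v x ∧ G.dist ρ x = k + r := by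
  induction r generalizing k u v with
  | zero => exact ⟨v, .refl _, hl.2.1⟩
  | succ r ih =>
    obtain ⟨w, h1, h2, h3, h4⟩ := h
    obtain ⟨x, hx, hd⟩ := ih (hl.step hg (by omega) h1 h2) (by omega) h4
    have hadj : (SimpleGraph.fromEdgeSet (s : Set (Sym2 V))).Adj v w :=
      (SimpleGraph.fromEdgeSet_adj _).2 ⟨h3, h1.ne⟩
    exact ⟨x, hadj.reachable.trans hx, by omega⟩

lemma lt_card_reachSet {R : ℕ} (hg : 2 * R < G.girth) {s : Finset (Sym2 V)}
    (hs : s ⊆ edgeFinset' G) {v : V} (h : v ∈ descendSet G R s) :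
    R < (reachSet s v).card := by
  obtain ⟨x, hx, hd⟩ := (mem_descendSet.1 h).exists_dist hg atLevel_root (by omega)
  obtain ⟨q, hq⟩ := hx.exists_isPath
  have h1 := SimpleGraph.dist_le (q.mapLe (fromEdgeSet_le hs))
  have h2 : q.support.toFinset ⊆ reachSet s v := fun w hw =>
    mem_reachSet.2 ⟨q.takeUntil w (List.mem_toFinset.1 hw)⟩
  have h3 := Finset.card_le_card h2
  rw [List.toFinset_card_of_nodup hq.support_nodup, SimpleGraph.Walk.length_support] at h3
  rw [SimpleGraph.Walk.length_map] at h1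
  omega

lemma descends_of_mem_twoCoreComp {s : Finset (Sym2 V)} (hs : s ⊆ edgeFinset' G)
    {c : (SimpleGraph.fromEdgeSet (s : Set (Sym2 V))).ConnectedComponent} {v : V}
    (h : v ∈ (twoCoreComp (SimpleGraph.fromEdgeSet (s : Set (Sym2 V))) c).support) (R : ℕ) :
    v ∈ descendSet G R s := by
  obtain ⟨w, hw⟩ := h
  obtain ⟨H, ⟨hH, -, hdeg⟩, hadj⟩ := SimpleGraph.sSup_adj.1 hw
  have key : ∀ r u x, x ∈ H.support → Descends G s r u x := by
    intro r
    induction r with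
    | zero => intro u x _; trivial
    | succ r ih =>
      intro u x hx
      obtain ⟨y, hy, hyu⟩ := Set.exists_ne_of_one_lt_ncard (hdeg x hx) u
      have hxy : H.Adj x y := hy
      have h2 := hH hxy
      exact ⟨y, fromEdgeSet_le hs h2, hyu, ((SimpleGraph.fromEdgeSet_adj _).1 h2).1,
        ih x y ⟨x, hxy.symm⟩⟩
  exact mem_descendSet.2 (key R v v ⟨w, hadj⟩)

end DescendSet

section Sprinkling

variable {G : SimpleGraph V}

/-- The edge set `T` connects `A` to `B`. -/
def Connects (T : Finset (Sym2 V)) (A B : Finset V) : Prop :=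
  ∃ x ∈ A, ∃ y ∈ B, (SimpleGraph.fromEdgeSet (T : Set (Sym2 V))).Reachable x y

lemma fromEdgeSet_mono_finset {s t : Finset (Sym2 V)} (h : s ⊆ t) :
    SimpleGraph.fromEdgeSet (s : Set (Sym2 V)) ≤ SimpleGraph.fromEdgeSet (t : Set (Sym2 V)) :=
  SimpleGraph.fromEdgeSet_mono (by exact_mod_cast h)

lemma Connects.mono {T T' : Finset (Sym2 V)} {A B : Finset V} (h : Connects T A B)
    (hT : T ⊆ T') : Connects T' A B := by
  obtain ⟨x, hx, y, hy, hr⟩ := h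
  exact ⟨x, hx, y, hy, hr.mono (fromEdgeSet_mono_finset hT)⟩

lemma cutCard_compl (S : Finset V) : cutCard G Sᶜ = cutCard G S := by
  unfold cutCard
  congr 1
  ext e
  simp only [Finset.mem_filter, Finset.mem_compl, and_congr_right_iff]
  refine fun _ => ⟨?_, ?_⟩
  · rintro ⟨x, hx, y, hy, rfl⟩
    exact ⟨y, not_not.1 hy, x, hx, Sym2.eq_swap⟩
  · rintro ⟨x, hx, y, hy, rfl⟩
    exact ⟨y, hy, x, not_not.2 hx, Sym2.eq_swap⟩

lemma IsExpander.le_cutCard {b : ℝ} {d : ℕ} (hG : IsExpander G b d) (hb : 0 < b) {a : ℝ}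
    {S : Finset V} (h1 : a ≤ S.card) (h2 : a ≤ Sᶜ.card) : b * a ≤ cutCard G S := by
  rcases le_total (S.card : ℝ) (Fintype.card V / 2) with h | h
  · exact (mul_le_mul_of_nonneg_left h1 hb.le).trans (hG.2 S h)
  · have h3 : (S.card : ℝ) + Sᶜ.card = Fintype.card V := by
      exact_mod_cast Finset.card_add_card_compl S
    rw [← cutCard_compl]
    exact (mul_le_mul_of_nonneg_left h2 hb.le).trans (hG.2 Sᶜ (by linarith))

/-- After deleting few edges from an expander, large sets are still joined by short paths. -/
lemma exists_short_connection {b η : ℝ} {d : ℕ} (hG : IsRegularExpander G b d) (hb : 0 < b)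
    (hn : 0 < Fintype.card V) {L : ℕ} (hL : 2 * d < L * (b * η)) {A B : Finset V}
    (hA : η * Fintype.card V ≤ A.card) (hB : η * Fintype.card V ≤ B.card)
    {D : Finset (Sym2 V)} (hD : (D.card : ℝ) ≤ b * η / 2 * Fintype.card V) :
    ∃ T ⊆ edgeFinset' G, Disjoint T D ∧ T.card ≤ L ∧ Connects T A B := by
  by_contra hcon
  push Not at hcon
  set S : ℕ → Finset V := fun k => Finset.univ.filter fun v =>
    ∃ T ⊆ edgeFinset' G, Disjoint T D ∧ T.card ≤ k ∧ Connects T A {v} with hS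
  have hmem : ∀ k v, v ∈ S k ↔
      ∃ T ⊆ edgeFinset' G, Disjoint T D ∧ T.card ≤ k ∧ Connects T A {v} := by simp [hS]
  have hAS : ∀ k, A ⊆ S k := fun k v hv => (hmem k v).2
    ⟨∅, by simp, by simp, by simp, v, hv, v, by simp, .refl _⟩
  have hBS : ∀ k ≤ L, B ⊆ (S k)ᶜ := by
    intro k hk v hv
    rw [Finset.mem_compl, hmem]
    rintro ⟨T, h1, h2, h3, x, hx, y, hy, hr⟩
    rw [Finset.mem_singleton] at hy
    exact hcon T h1 h2 (h3.trans hk) ⟨x, hx, v, hv, hy ▸ hr⟩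
  have hsucc : ∀ k, S k ⊆ S (k + 1) := by
    intro k v hv
    obtain ⟨T, h1, h2, h3, h4⟩ := (hmem k v).1 hv
    exact (hmem _ v).2 ⟨T, h1, h2, by omega, h4⟩
  have hgrow : ∀ k, (cutCard G (S k) : ℝ) ≤ D.card + ((S (k + 1) \ S k).card : ℝ) * d := by
    intro k
    have hsub : (edgeFinset' G).filter (fun e => ∃ x ∈ S k, ∃ y, y ∉ S k ∧ e = s(x, y))
        ⊆ D ∪ (S (k + 1) \ S k).biUnion
          fun v => (Finset.univ.filter fun w => G.Adj v w).image fun w => s(v, w) := by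
      intro e he
      rw [Finset.mem_filter] at he
      obtain ⟨heE, x, hx, y, hy, rfl⟩ := he
      by_cases heD : s(x, y) ∈ D
      · exact Finset.mem_union_left _ heD
      · refine Finset.mem_union_right _ ?_
        have hadj : G.Adj x y := mem_edgeFinset'.1 heE
        have hy' : y ∈ S (k + 1) := by
          obtain ⟨T, h1, h2, h3, a, ha, x', hx', hr⟩ := (hmem k x).1 hx
          rw [Finset.mem_singleton] at hx'
          subst hx'
          refine (hmem _ y).2 ⟨insert s(x', y) T, Finset.insert_subset heE h1,
            Finset.disjoint_insert_left.2 ⟨heD, h2⟩,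
            (Finset.card_insert_le _ _).trans (by omega), a, ha, y, by simp, ?_⟩
          have hr' := hr.mono (fromEdgeSet_mono_finset (Finset.subset_insert s(x', y) T))
          refine hr'.trans (SimpleGraph.Adj.reachable ?_)
          rw [SimpleGraph.fromEdgeSet_adj]
          exact ⟨by simp, hadj.ne⟩
        simp only [Finset.mem_biUnion, Finset.mem_image, Finset.mem_filter, Finset.mem_univ,
          true_and]
        exact ⟨y, Finset.mem_sdiff.2 ⟨hy', hy⟩, x, hadj.symm, Sym2.eq_swap⟩
    have h1 := (Finset.card_le_card hsub).trans (Finset.card_union_le _ _)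
    have h2 := Finset.card_biUnion_le_card_mul (S (k + 1) \ S k)
      (fun v => (Finset.univ.filter fun w => G.Adj v w).image fun w => s(v, w)) d
      fun v _ => Finset.card_image_le.trans (card_filter_adj hG.2 v).le
    have h3 := h1.trans (Nat.add_le_add_left h2 _)
    exact_mod_cast h3
  set n : ℝ := (Fintype.card V : ℝ) with hn'
  have hn0 : 0 < n := by rw [hn']; exact_mod_cast hn
  have hcard : ∀ k ≤ L, k * (b * η / 2 * n) ≤ d * ((S k).card : ℝ) := by
    intro k
    induction k with
    | zero => intro _; simp only [Nat.cast_zero, zero_mul]; positivity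
    | succ k ih =>
      intro hk
      have h1 := ih (by omega)
      have h2 := hG.1.le_cutCard hb (S := S k) (a := η * n)
        (hA.trans (by exact_mod_cast Finset.card_le_card (hAS k)))
        (hB.trans (by exact_mod_cast Finset.card_le_card (hBS k (by omega))))
      have h3 := hgrow k
      have h4 : ((S (k + 1)).card : ℝ) = (S (k + 1) \ S k).card + (S k).card := by
        exact_mod_cast (Finset.card_sdiff_add_card_eq_card (hsucc k)).symm
      rw [h4]; push_cast
      linarith
  have h1 := hcard L le_rfl
  have h2 : ((S L).card : ℝ) ≤ n := by rw [hn']; exact_mod_cast Finset.card_le_univ (S L)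
  have h3 : (d : ℝ) * (S L).card ≤ d * n := mul_le_mul_of_nonneg_left h2 (Nat.cast_nonneg d)
  have h4 := mul_lt_mul_of_pos_right hL hn0
  linarith

lemma exists_disjoint_connections {b η : ℝ} {d : ℕ} (hG : IsRegularExpander G b d) (hb : 0 < b)
    (hn : 0 < Fintype.card V) {L : ℕ} (hL : 2 * d < L * (b * η)) {A B : Finset V}
    (hA : η * Fintype.card V ≤ A.card) (hB : η * Fintype.card V ≤ B.card) (m : ℕ)
    (hm : (m * L : ℝ) ≤ b * η / 2 * Fintype.card V) :
    ∃ T : ℕ → Finset (Sym2 V),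
      (∀ i < m, T i ⊆ edgeFinset' G ∧ (T i).card ≤ L ∧ Connects (T i) A B) ∧
      ∀ i < m, ∀ j < m, i ≠ j → Disjoint (T i) (T j) := by
  induction m with
  | zero => exact ⟨fun _ => ∅, by simp, by simp⟩
  | succ m ih =>
    have hL0 : (0 : ℝ) ≤ L := Nat.cast_nonneg L
    push_cast at hm
    obtain ⟨T, h1, h2⟩ := ih (by nlinarith)
    have hD : (((Finset.range m).biUnion T).card : ℝ) ≤ b * η / 2 * Fintype.card V := by
      have h3 := Finset.card_biUnion_le_card_mul (Finset.range m) T L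
        fun i hi => (h1 i (Finset.mem_range.1 hi)).2.1
      rw [Finset.card_range] at h3
      have h4 : (((Finset.range m).biUnion T).card : ℝ) ≤ m * L := by exact_mod_cast h3
      nlinarith
    obtain ⟨T', h3, h4, h5, h6⟩ := exists_short_connection hG hb hn hL hA hB hD
    have h7 : ∀ i < m, Disjoint T' (T i) := fun i hi =>
      h4.mono_right (Finset.subset_biUnion_of_mem T (Finset.mem_range.2 hi))
    refine ⟨fun i => if i = m then T' else T i, fun i hi => ?_, fun i hi j hj hij => ?_⟩
    · by_cases him : i = m
      · simpa [him] using ⟨h3, h5, h6⟩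
      · simpa [him] using h1 i (by omega)
    · by_cases him : i = m <;> by_cases hjm : j = m
      · omega
      · simpa [him, hjm] using h7 j (by omega)
      · simpa [him, hjm] using (h7 i (by omega)).symm
      · simpa [him, hjm] using h2 i (by omega) j (by omega) hij

/-- Percolation on an expander is exponentially unlikely to leave two large sets
disconnected. -/
lemma bernoulliExp_not_connects_le {b η δ : ℝ} {d : ℕ} (hG : IsRegularExpander G b d) (hb : 0 < b)
    (hη : 0 < η) (hδ : 0 ≤ δ) (hδ1 : δ ≤ 1)
    (hn : 0 < Fintype.card V) {L : ℕ} (hL0 : 0 < L) (hL : 2 * d < L * (b * η)) {A B : Finset V}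
    (hA : η * Fintype.card V ≤ A.card) (hB : η * Fintype.card V ≤ B.card) :
    bernoulliExp δ (edgeFinset' G) (fun t => if ¬ Connects t A B then 1 else 0)
      ≤ Real.exp (1 - δ ^ L * (b * η / (2 * L)) * Fintype.card V) := by
  set n : ℝ := (Fintype.card V : ℝ) with hn'
  have hn0 : 0 < n := by rw [hn']; exact_mod_cast hn
  have hL0' : (0 : ℝ) < L := by exact_mod_cast hL0
  set y := b * η / (2 * L) * n with hy
  have hy0 : 0 ≤ y := by positivity
  set m := ⌊y⌋₊
  have hmy : (m : ℝ) ≤ y := Nat.floor_le hy0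
  have hym : y < m + 1 := Nat.lt_floor_add_one y
  have hyL : y * L = b * η / 2 * n := by rw [hy]; field_simp
  obtain ⟨T, h1, h2⟩ := exists_disjoint_connections hG hb hn hL hA hB m
    (by rw [← hn', ← hyL]; exact mul_le_mul_of_nonneg_right hmy hL0'.le)
  have hq0 : 0 ≤ δ ^ L := pow_nonneg hδ L
  have hq1 : δ ^ L ≤ 1 := pow_le_one₀ hδ hδ1
  calc _ ≤ bernoulliExp δ (edgeFinset' G)
        (fun t => if ∀ i < m, ¬ T i ⊆ t then 1 else 0) := by
        refine bernoulliExp_mono hδ hδ1 fun t _ => ?_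
        by_cases hc : Connects t A B
        · rw [if_neg (not_not.2 hc)]; split_ifs <;> norm_num
        · rw [if_pos hc, if_pos fun i hi hsub => hc ((h1 i hi).2.2.mono hsub)]
    _ ≤ (1 - δ ^ L) ^ m := bernoulliExp_avoid_le hδ hδ1 m L T
        (fun i hi => ⟨(h1 i hi).1, (h1 i hi).2.1⟩) h2
    _ ≤ Real.exp (-δ ^ L) ^ m :=
        pow_le_pow_left₀ (by linarith) (by linarith [Real.add_one_le_exp (-δ ^ L)]) m
    _ ≤ _ := by
        rw [← Real.exp_nat_mul, Real.exp_le_exp]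
        have : δ ^ L * (b * η / (2 * L)) * n = δ ^ L * y := by rw [hy]; ring
        rw [this]
        nlinarith

end Sprinkling

section Splitting

variable {G : SimpleGraph V}

/-- The vertex sets of the components of `s` with at least `R` vertices. -/
def largeComps (R : ℕ) (s : Finset (Sym2 V)) : Finset (Finset V) :=
  (Finset.univ.filter fun v => R ≤ (reachSet s v).card).image (reachSet s)

lemma self_mem_reachSet (s : Finset (Sym2 V)) (v : V) : v ∈ reachSet s v :=
  mem_reachSet.2 (.refl _)

lemma reachSet_eq_of_mem {s : Finset (Sym2 V)} {v w : V} (h : w ∈ reachSet s v) :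
    reachSet s w = reachSet s v := by
  have h' := mem_reachSet.1 h
  ext x
  rw [mem_reachSet, mem_reachSet]
  exact ⟨h'.trans, h'.symm.trans⟩

lemma pairwiseDisjoint_largeComps (R : ℕ) (s : Finset (Sym2 V)) :
    (largeComps R s : Set (Finset V)).PairwiseDisjoint id := by
  intro X hX Y hY hne
  simp only [largeComps, Finset.coe_image, Set.mem_image] at hX hY
  obtain ⟨v, -, rfl⟩ := hX
  obtain ⟨w, -, rfl⟩ := hY
  refine Finset.disjoint_left.2 fun x hx hy => hne ?_
  exact (reachSet_eq_of_mem hx).symm.trans (reachSet_eq_of_mem hy)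

lemma card_largeComps_mul_le (R : ℕ) (s : Finset (Sym2 V)) :
    (largeComps R s).card * R ≤ Fintype.card V := by
  have h1 := Finset.card_biUnion (s := largeComps R s) (t := id)
    (pairwiseDisjoint_largeComps R s)
  have h2 : (largeComps R s).card • R ≤ ∑ X ∈ largeComps R s, (id X : Finset V).card := by
    refine Finset.card_nsmul_le_sum _ _ _ fun X hX => ?_
    obtain ⟨v, hv, rfl⟩ := Finset.mem_image.1 hX
    exact (Finset.mem_filter.1 hv).2
  rw [← h1, smul_eq_mul] at h2
  exact h2.trans (Finset.card_le_univ _)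

/-- `X` is a union of connected components of the graph with edge set `s`. -/
def IsClosedUnder (s : Finset (Sym2 V)) (X : Finset V) : Prop :=
  ∀ x ∈ X, reachSet s x ⊆ X

lemma isClosedUnder_reachSet (s : Finset (Sym2 V)) (v : V) : IsClosedUnder s (reachSet s v) :=
  fun _ hx => (reachSet_eq_of_mem hx).le

lemma IsClosedUnder.sdiff {s : Finset (Sym2 V)} {X Y : Finset V} (hX : IsClosedUnder s X)
    (hY : IsClosedUnder s Y) : IsClosedUnder s (X \ Y) := by
  intro x hx y hy
  rw [Finset.mem_sdiff] at hx ⊢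
  refine ⟨hX x hx.1 hy, fun hyY => hx.2 (hY y hyY ?_)⟩
  rw [reachSet_eq_of_mem hy]
  exact self_mem_reachSet s x

/-- The large components of `s` can be split into two parts of total size at least `a` that `t`
leaves disconnected. -/
def SplitsAt (R : ℕ) (a : ℝ) (s t : Finset (Sym2 V)) (𝒮 : Finset (Finset V)) : Prop :=
  a ≤ (𝒮.biUnion id).card ∧ a ≤ ((largeComps R s \ 𝒮).biUnion id).card ∧
    ¬ Connects t (𝒮.biUnion id) ((largeComps R s \ 𝒮).biUnion id)

lemma exists_splitsAt_of_isClosedUnder {R : ℕ} (hg : 2 * R < G.girth) {s t : Finset (Sym2 V)}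
    (hs : s ⊆ edgeFinset' G) {a : ℝ} {X : Finset V}
    (hX : IsClosedUnder (s ∪ t) X) (h1 : a ≤ (descendSet G R s ∩ X).card)
    (h2 : a ≤ (descendSet G R s \ X).card) :
    ∃ 𝒮 ∈ (largeComps R s).powerset, SplitsAt R a s t 𝒮 := by
  have hsub : ∀ v, reachSet s v ⊆ reachSet (s ∪ t) v := fun v w hw =>
    mem_reachSet.2 ((mem_reachSet.1 hw).mono (fromEdgeSet_mono_finset Finset.subset_union_left))
  have hlarge : ∀ v ∈ descendSet G R s, reachSet s v ∈ largeComps R s := fun v hv =>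
    Finset.mem_image_of_mem _
      (Finset.mem_filter.2 ⟨Finset.mem_univ _, (lt_card_reachSet hg hs hv).le⟩)
  set 𝒮 := (largeComps R s).filter (· ⊆ X) with h𝒮
  have hin : 𝒮.biUnion id ⊆ X := by
    intro x hx
    obtain ⟨Y, hY, hxY⟩ := Finset.mem_biUnion.1 hx
    exact (Finset.mem_filter.1 hY).2 hxY
  have hout : ∀ y ∈ (largeComps R s \ 𝒮).biUnion id, y ∉ X := by
    intro y hy hyX
    obtain ⟨Y, hY, hyY⟩ := Finset.mem_biUnion.1 hy
    rw [Finset.mem_sdiff] at hY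
    refine hY.2 (Finset.mem_filter.2 ⟨hY.1, ?_⟩)
    obtain ⟨v, -, rfl⟩ := Finset.mem_image.1 hY.1
    have hyY' : y ∈ reachSet s v := hyY
    rw [← reachSet_eq_of_mem hyY']
    exact (hsub y).trans (hX y hyX)
  refine ⟨𝒮, Finset.mem_powerset.2 (Finset.filter_subset _ _), ?_, ?_, ?_⟩
  · refine h1.trans (Nat.cast_le.2 (Finset.card_le_card fun v hv => ?_))
    rw [Finset.mem_inter] at hv
    exact Finset.mem_biUnion.2 ⟨reachSet s v, Finset.mem_filter.2
      ⟨hlarge v hv.1, (hsub v).trans (hX v hv.2)⟩, self_mem_reachSet s v⟩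
  · refine h2.trans (Nat.cast_le.2 (Finset.card_le_card fun v hv => ?_))
    rw [Finset.mem_sdiff] at hv
    refine Finset.mem_biUnion.2 ⟨reachSet s v, Finset.mem_sdiff.2 ⟨hlarge v hv.1, fun h => ?_⟩,
      self_mem_reachSet s v⟩
    exact hv.2 ((Finset.mem_filter.1 h).2 (self_mem_reachSet s v))
  · rintro ⟨x, hx, y, hy, hr⟩
    exact hout y hy (hX x (hin hx)
      (mem_reachSet.2 (hr.mono (fromEdgeSet_mono_finset Finset.subset_union_right))))

lemma exists_isClosedUnder_card_inter (s : Finset (Sym2 V)) (W : Finset V) {a M : ℝ} (ha : 0 < a)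
    (haW : a ≤ W.card) (hM : ∀ v, ((reachSet s v).card : ℝ) ≤ M) :
    ∃ X, IsClosedUnder s X ∧ a ≤ (W ∩ X).card ∧ ((W ∩ X).card : ℝ) ≤ a + M := by
  obtain ⟨X, hX, hmin⟩ := Finset.exists_min_image
    (Finset.univ.filter fun X : Finset V => IsClosedUnder s X ∧ a ≤ (W ∩ X).card) Finset.card
    ⟨Finset.univ, Finset.mem_filter.2 ⟨Finset.mem_univ _, fun _ _ => Finset.subset_univ _,
      by rwa [Finset.inter_univ]⟩⟩
  simp only [Finset.mem_filter, Finset.mem_univ, true_and] at hX hmin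
  refine ⟨X, hX.1, hX.2, ?_⟩
  have hne : X.Nonempty := by
    rw [Finset.nonempty_iff_ne_empty]
    rintro rfl
    have := hX.2
    simp only [Finset.inter_empty, Finset.card_empty, Nat.cast_zero] at this
    linarith
  obtain ⟨x, hx⟩ := hne
  have hlt : ((W ∩ (X \ reachSet s x)).card : ℝ) < a := by
    by_contra hge
    have h1 := hmin _ ⟨hX.1.sdiff (isClosedUnder_reachSet s x), not_lt.1 hge⟩
    have h2 : (X \ reachSet s x).card < X.card := Finset.card_lt_card
      ⟨Finset.sdiff_subset, fun h => (Finset.mem_sdiff.1 (h hx)).2 (self_mem_reachSet s x)⟩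
    omega
  have hsub : W ∩ X ⊆ W ∩ (X \ reachSet s x) ∪ reachSet s x := by
    intro y hy
    rw [Finset.mem_inter] at hy
    by_cases hyr : y ∈ reachSet s x
    · exact Finset.mem_union_right _ hyr
    · exact Finset.mem_union_left _ (Finset.mem_inter.2 ⟨hy.1, Finset.mem_sdiff.2 ⟨hy.2, hyr⟩⟩)
  have h3 : ((W ∩ X).card : ℝ) ≤ (W ∩ (X \ reachSet s x)).card + (reachSet s x).card := by
    exact_mod_cast (Finset.card_le_card hsub).trans (Finset.card_union_le _ _)
  linarith [hM x]

lemma compVerts_connectedComponentMk (s : Finset (Sym2 V)) (v : V) :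
    compVerts (SimpleGraph.fromEdgeSet (s : Set (Sym2 V)))
      ((SimpleGraph.fromEdgeSet (s : Set (Sym2 V))).connectedComponentMk v) = reachSet s v := by
  ext w
  rw [compVerts, Finset.mem_filter, mem_reachSet, SimpleGraph.ConnectedComponent.eq]
  simp [SimpleGraph.reachable_comm]

lemma exists_splitsAt {R d : ℕ} (hg : 2 * R < G.girth) (hreg : ∀ v, (G.neighborSet v).ncard = d)
    {s t : Finset (Sym2 V)} (hs : s ⊆ edgeFinset' G) (ht : t ⊆ edgeFinset' G) {a : ℝ}
    (ha : ((d + 1) ^ R : ℝ) ≤ a) {v : V}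
    (hmax : ∀ w, (reachSet (s ∪ t) w).card ≤ (reachSet (s ∪ t) v).card)
    (hbad : 8 * a ≤ (descendSet G R (s ∪ t) \ reachSet (s ∪ t) v).card)
    (hclose : ((descendSet G R (s ∪ t)).card : ℝ) < (descendSet G R s).card + a) :
    ∃ 𝒮 ∈ (largeComps R s).powerset, SplitsAt R a s t 𝒮 := by
  have ha0 : 0 < a := lt_of_lt_of_le (by positivity) ha
  set W := descendSet G R (s ∪ t) with hW
  set W' := descendSet G R s with hW'
  set C := reachSet (s ∪ t) v with hC
  have hWW : W' ⊆ W := descendSet_mono Finset.subset_union_left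
  have hdiff : ((W \ W').card : ℝ) < a := by
    have : ((W \ W').card : ℝ) + W'.card = W.card := by
      exact_mod_cast Finset.card_sdiff_add_card_eq_card hWW
    linarith
  have hsplit : ∀ X : Finset V, ((W' ∩ X).card : ℝ) + (W' \ X).card = W'.card := fun X => by
    exact_mod_cast Finset.card_inter_add_card_sdiff W' X
  have hW'C : 7 * a ≤ (W' \ C).card := by
    have hsub : W \ C ⊆ (W' \ C) ∪ (W \ W') := by
      intro y hy
      simp only [Finset.mem_union, Finset.mem_sdiff] at hy ⊢
      tauto
    have h1 : ((W \ C).card : ℝ) ≤ (W' \ C).card + (W \ W').card := by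
      exact_mod_cast (Finset.card_le_card hsub).trans (Finset.card_union_le _ _)
    linarith
  by_cases hCa : a ≤ (W' ∩ C).card
  · exact exists_splitsAt_of_isClosedUnder hg hs (isClosedUnder_reachSet _ _) hCa (by linarith)
  · have hCcard : (C.card : ℝ) ≤ 2 * a := by
      by_cases hCW : C ⊆ W
      · have hsub : C ⊆ (W' ∩ C) ∪ (W \ W') := by
          intro y hy
          have := hCW hy
          simp only [Finset.mem_union, Finset.mem_sdiff, Finset.mem_inter]
          tauto
        have h1 : (C.card : ℝ) ≤ (W' ∩ C).card + (W \ W').card := by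
          exact_mod_cast (Finset.card_le_card hsub).trans (Finset.card_union_le _ _)
        linarith
      · obtain ⟨y, hyC, hyW⟩ := Finset.not_subset.1 hCW
        have h1 := card_reachSet_le_of_not_descends hreg (Finset.union_subset hs ht) hyW
        rw [reachSet_eq_of_mem hyC] at h1
        have h2 : (C.card : ℝ) ≤ (d + 1) ^ R := by exact_mod_cast h1
        linarith
    obtain ⟨X, hX, h1, h2⟩ := exists_isClosedUnder_card_inter (s ∪ t) W' (a := a) (M := 2 * a) ha0
      (by linarith [hsplit C, (Nat.cast_nonneg (W' ∩ C).card : (0 : ℝ) ≤ _)])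
      fun w => le_trans (by exact_mod_cast hmax w) hCcard
    refine exists_splitsAt_of_isClosedUnder hg hs hX h1 ?_
    linarith [hsplit C, hsplit X, (Nat.cast_nonneg (W' ∩ C).card : (0 : ℝ) ≤ _)]

end Splitting

section MainBound

variable {G : SimpleGraph V}

/-- Some largest component of `H` leaves more than an `ε` fraction of the vertices in the 2-cores
of the other components. -/
def HasLargeOuterCores (ε : ℝ) (H : SimpleGraph V) : Prop :=
  ∃ c₁ : H.ConnectedComponent, IsLargestComp H c₁ ∧
    ε * Fintype.card V <
      ((Finset.univ.filter (fun v : V =>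
          H.connectedComponentMk v ≠ c₁ ∧
          v ∈ (twoCoreComp H (H.connectedComponentMk v)).support)).card : ℝ)

lemma HasLargeOuterCores.exists_reachSet {ε : ℝ} {s : Finset (Sym2 V)} (hs : s ⊆ edgeFinset' G)
    (h : HasLargeOuterCores ε (SimpleGraph.fromEdgeSet (s : Set (Sym2 V)))) (R : ℕ) :
    ∃ v, (∀ w, (reachSet s w).card ≤ (reachSet s v).card) ∧
      ε * Fintype.card V < (descendSet G R s \ reachSet s v).card := by
  obtain ⟨c, hc, hlt⟩ := h
  obtain ⟨v, rfl⟩ := c.exists_rep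
  refine ⟨v, fun w => ?_, hlt.trans_le (Nat.cast_le.2 (Finset.card_le_card fun w hw => ?_))⟩
  · have := hc (SimpleGraph.connectedComponentMk _ w)
    rw [compVerts_connectedComponentMk] at this
    exact this.trans_eq (congrArg Finset.card (compVerts_connectedComponentMk s v))
  · obtain ⟨-, hne, hmem⟩ := Finset.mem_filter.1 hw
    refine Finset.mem_sdiff.2 ⟨descends_of_mem_twoCoreComp hs hmem R, fun hr => hne ?_⟩
    exact SimpleGraph.ConnectedComponent.sound (mem_reachSet.1 hr).symm

lemma bernoulliExp_exists_splitsAt_le {b η δ : ℝ} {d : ℕ} (hG : IsRegularExpander G b d)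
    (hb : 0 < b) (hη : 0 < η) (hδ : 0 ≤ δ) (hδ1 : δ ≤ 1) (hn : 0 < Fintype.card V) {L : ℕ}
    (hL0 : 0 < L) (hL : 2 * d < L * (b * η)) {R : ℕ} (hR : 2 ≤ R * (δ ^ L * (b * η / (2 * L))))
    (s : Finset (Sym2 V)) :
    bernoulliExp δ (edgeFinset' G) (fun t =>
        if ∃ 𝒮 ∈ (largeComps R s).powerset, SplitsAt R (η * Fintype.card V) s t 𝒮 then 1 else 0)
      ≤ Real.exp (1 - δ ^ L * (b * η / (2 * L)) / 2 * Fintype.card V) := by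
  set κ := δ ^ L * (b * η / (2 * L)) with hκ
  set n : ℝ := (Fintype.card V : ℝ) with hn'
  have hunion : bernoulliExp δ (edgeFinset' G) (fun t =>
        if ∃ 𝒮 ∈ (largeComps R s).powerset, SplitsAt R (η * n) s t 𝒮 then 1 else 0)
      ≤ ∑ 𝒮 ∈ (largeComps R s).powerset, bernoulliExp δ (edgeFinset' G) (fun t =>
          if SplitsAt R (η * n) s t 𝒮 then 1 else 0) := by
    rw [← bernoulliExp_sum]
    refine bernoulliExp_mono hδ hδ1 fun t _ => ?_
    have hnn : ∀ 𝒮 ∈ (largeComps R s).powerset,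
        (0 : ℝ) ≤ if SplitsAt R (η * n) s t 𝒮 then 1 else 0 := fun 𝒮 _ => by split_ifs <;> simp
    split_ifs with h
    · obtain ⟨𝒮, h𝒮, hsp⟩ := h
      refine le_trans ?_ (Finset.single_le_sum hnn h𝒮)
      rw [if_pos hsp]
    · exact Finset.sum_nonneg hnn
  have hterm : ∀ 𝒮 ∈ (largeComps R s).powerset, bernoulliExp δ (edgeFinset' G) (fun t =>
      if SplitsAt R (η * n) s t 𝒮 then 1 else 0) ≤ Real.exp (1 - κ * n) := by
    intro 𝒮 _
    by_cases hsz : η * n ≤ (𝒮.biUnion id).card ∧ η * n ≤ ((largeComps R s \ 𝒮).biUnion id).card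
    · refine le_trans (bernoulliExp_mono hδ hδ1 fun t _ => ?_)
        (bernoulliExp_not_connects_le hG hb hη hδ hδ1 hn hL0 hL hsz.1 hsz.2)
      by_cases h : SplitsAt R (η * n) s t 𝒮
      · rw [if_pos h, if_pos h.2.2]
      · rw [if_neg h]; split_ifs <;> simp
    · rw [bernoulliExp_congr (F' := fun _ => 0), bernoulliExp_const]
      · positivity
      · intro t _
        exact if_neg fun h => hsz ⟨h.1, h.2.1⟩
  have hcard : ((largeComps R s).card : ℝ) ≤ κ / 2 * n := by
    have h1 : ((largeComps R s).card : ℝ) * R ≤ n := by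
      rw [hn']; exact_mod_cast card_largeComps_mul_le R s
    have hκ0 : 0 ≤ κ := by positivity
    nlinarith [mul_le_mul_of_nonneg_left h1 hκ0,
      mul_le_mul_of_nonneg_left hR (Nat.cast_nonneg (α := ℝ) (largeComps R s).card)]
  have hpow : (2 : ℝ) ^ (largeComps R s).card ≤ Real.exp (κ / 2 * n) := by
    have h2 : (2 : ℝ) ≤ Real.exp 1 := by linarith [Real.add_one_le_exp (1 : ℝ)]
    calc (2 : ℝ) ^ (largeComps R s).card ≤ Real.exp 1 ^ (largeComps R s).card := by gcongr
      _ = Real.exp ((largeComps R s).card) := by rw [← Real.exp_nat_mul, mul_one]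
      _ ≤ _ := Real.exp_le_exp.2 hcard
  calc _ ≤ _ := hunion
    _ ≤ ∑ 𝒮 ∈ (largeComps R s).powerset, Real.exp (1 - κ * n) := Finset.sum_le_sum hterm
    _ = 2 ^ (largeComps R s).card * Real.exp (1 - κ * n) := by
      rw [Finset.sum_const, Finset.card_powerset, nsmul_eq_mul]; push_cast; rfl
    _ ≤ Real.exp (κ / 2 * n) * Real.exp (1 - κ * n) := by gcongr
    _ = _ := by rw [← Real.exp_add]; congr 1; ring

lemma bernoulliExp_card_descendSet_deviation_le {p τ : ℝ} (h0 : 0 ≤ p) (h1 : p ≤ 1) {d : ℕ}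
    (hd : 0 < d) (hτ : 0 ≤ τ) (hτ1 : τ ≤ 1) (hreg : ∀ v, (G.neighborSet v).ncard = d) (R : ℕ)
    {σ : ℝ} (hσ : |σ| = 1) :
    bernoulliExp p (edgeFinset' G) (fun s =>
        if bernoulliExp p (edgeFinset' G) (fun s => σ * ((descendSet G R s).card : ℝ))
            + τ * Fintype.card V ≤ σ * ((descendSet G R s).card : ℝ) then 1 else 0)
      ≤ Real.exp (-(τ ^ 2 / (4 * (2 * (d + 1) ^ R) ^ 2 * d)) * Fintype.card V) := by
  set C : ℝ := 2 * (d + 1) ^ R with hC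
  have hdR : (1 : ℝ) ≤ d := by exact_mod_cast hd
  have hC1 : 1 ≤ C := by
    have : (1 : ℝ) ≤ (d + 1) ^ R := one_le_pow₀ (by linarith)
    linarith
  have hC0 : 0 < C := by linarith
  have hl : 0 ≤ τ / (2 * C ^ 2 * d) := by positivity
  have hlC : τ / (2 * C ^ 2 * d) * C ≤ 1 := by
    rw [div_mul_eq_mul_div, div_le_one (by positivity)]
    have : 1 ≤ C * d := by nlinarith
    nlinarith [mul_le_mul_of_nonneg_left this hC0.le]
  have hf : ∀ e ∈ edgeFinset' G, ∀ s : Finset (Sym2 V),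
      |σ * ((descendSet G R (insert e s)).card : ℝ) - σ * ((descendSet G R s).card : ℝ)| ≤ C := by
    intro e _ s
    rw [← mul_sub, abs_mul, hσ, one_mul]
    exact abs_card_descendSet_insert_sub_le hreg R e s
  refine (bernoulliExp_deviation_le h0 h1 _ hf hl hlC _).trans (Real.exp_le_exp.2 ?_)
  have hE : ((edgeFinset' G).card : ℝ) ≤ Fintype.card V * d := by
    exact_mod_cast card_edgeFinset'_le hreg
  calc -(τ / (2 * C ^ 2 * d)) * (τ * Fintype.card V)
        + (τ / (2 * C ^ 2 * d) * C) ^ 2 * (edgeFinset' G).card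
      ≤ -(τ / (2 * C ^ 2 * d)) * (τ * Fintype.card V)
        + (τ / (2 * C ^ 2 * d) * C) ^ 2 * (Fintype.card V * d) := by gcongr
    _ = _ := by field_simp; ring

lemma bernoulliExp_hasLargeOuterCores_le {p p' δ b η τ : ℝ} {d r L : ℕ} (hp' : 0 ≤ p')
    (hp'1 : p' ≤ 1) (hδ : 0 ≤ δ) (hδ1 : δ ≤ 1) (hpp : 1 - p = (1 - p') * (1 - δ)) (hd : 0 < d)
    (hb : 0 < b) (hη : 0 < η) (hτ : 0 ≤ τ) (hτ1 : τ ≤ 1) (hτη : 3 * τ ≤ η)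
    (hroot : rootProb d p r - rootProb d p' r ≤ τ) (hL0 : 0 < L) (hL : 2 * d < L * (b * η))
    (hR : 2 ≤ ((r + 1 : ℕ) : ℝ) * (δ ^ L * (b * η / (2 * L)))) (hG : IsRegularExpander G b d)
    (hg : 2 * (r + 1) < G.girth) (hn : 0 < Fintype.card V)
    (hbig : ((d + 1) ^ (r + 1) : ℝ) ≤ η * Fintype.card V) :
    bernoulliExp p (edgeFinset' G) (fun s =>
        if HasLargeOuterCores (8 * η) (SimpleGraph.fromEdgeSet (s : Set (Sym2 V))) then 1 else 0)
      ≤ 2 * Real.exp (-(τ ^ 2 / (4 * (2 * (d + 1) ^ (r + 1)) ^ 2 * d)) * Fintype.card V)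
        + Real.exp (1 - δ ^ L * (b * η / (2 * L)) / 2 * Fintype.card V) := by
  have hreg := hG.2
  set E := edgeFinset' G with hE
  set n : ℝ := (Fintype.card V : ℝ) with hn'
  have hn0 : 0 < n := by rw [hn']; exact_mod_cast hn
  set D : Finset (Sym2 V) → ℝ := fun s => ((descendSet G (r + 1) s).card : ℝ) with hD
  have hp0 : 0 ≤ p := by nlinarith
  have hp1 : p ≤ 1 := by nlinarith
  set F₁ : Finset (Sym2 V) → ℝ := fun s =>
    if bernoulliExp p E (fun s => 1 * D s) + τ * n ≤ 1 * D s then 1 else 0 with hF₁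
  set F₂ : Finset (Sym2 V) → ℝ := fun s =>
    if bernoulliExp p' E (fun s => (-1) * D s) + τ * n ≤ (-1) * D s then 1 else 0 with hF₂
  set F₃ : Finset (Sym2 V) → Finset (Sym2 V) → ℝ := fun s t =>
    if ∃ 𝒮 ∈ (largeComps (r + 1) s).powerset, SplitsAt (r + 1) (η * n) s t 𝒮
      then 1 else 0 with hF₃
  have hF₁n : ∀ s, 0 ≤ F₁ s := fun s => by simp only [hF₁]; split_ifs <;> simp
  have hF₂n : ∀ s, 0 ≤ F₂ s := fun s => by simp only [hF₂]; split_ifs <;> simp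
  have hF₃n : ∀ s t, 0 ≤ F₃ s t := fun s t => by simp only [hF₃]; split_ifs <;> simp
  have hμ : ∀ q, bernoulliExp q E D = n * rootProb d q r := fun q =>
    bernoulliExp_card_descendSet hg hreg q
  have hpt : ∀ s ⊆ E, ∀ t ⊆ E,
      (if HasLargeOuterCores (8 * η) (SimpleGraph.fromEdgeSet ((s ∪ t : Finset (Sym2 V)) :
        Set (Sym2 V))) then (1 : ℝ) else 0) ≤ F₁ (s ∪ t) + (F₂ s + F₃ s t) := by
    intro s hs t ht
    have a1 := hF₁n (s ∪ t)
    have a2 := hF₂n s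
    have a3 := hF₃n s t
    split_ifs with hbad
    swap
    · linarith
    by_cases h1 : bernoulliExp p E (fun s => 1 * D s) + τ * n ≤ 1 * D (s ∪ t)
    · have : F₁ (s ∪ t) = 1 := if_pos h1
      linarith
    by_cases h2 : bernoulliExp p' E (fun s => (-1) * D s) + τ * n ≤ (-1) * D s
    · have : F₂ s = 1 := if_pos h2
      linarith
    rw [bernoulliExp_const_mul, hμ, not_le] at h1 h2
    obtain ⟨v, hmax, hlt⟩ := hbad.exists_reachSet (Finset.union_subset hs ht) (r + 1)
    have hclose : D (s ∪ t) < D s + η * n := by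
      nlinarith [mul_le_mul_of_nonneg_left hroot hn0.le, mul_le_mul_of_nonneg_right hτη hn0.le]
    have h3 := exists_splitsAt hg hreg hs ht hbig hmax
      (by rw [← mul_assoc]; exact hlt.le) hclose
    have : F₃ s t = 1 := if_pos h3
    linarith
  have hb1 : bernoulliExp p E F₁
      ≤ Real.exp (-(τ ^ 2 / (4 * (2 * (d + 1) ^ (r + 1)) ^ 2 * d)) * n) :=
    bernoulliExp_card_descendSet_deviation_le hp0 hp1 hd hτ hτ1 hreg (r + 1) (by simp)
  have hb2 : bernoulliExp p' E F₂
      ≤ Real.exp (-(τ ^ 2 / (4 * (2 * (d + 1) ^ (r + 1)) ^ 2 * d)) * n) :=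
    bernoulliExp_card_descendSet_deviation_le hp' hp'1 hd hτ hτ1 hreg (r + 1) (by simp)
  have hb3 : bernoulliExp p' E (fun s => bernoulliExp δ E (F₃ s))
      ≤ Real.exp (1 - δ ^ L * (b * η / (2 * L)) / 2 * n) := by
    refine (bernoulliExp_mono hp' hp'1 fun s _ =>
      bernoulliExp_exists_splitsAt_le hG hb hη hδ hδ1 hn hL0 hL hR s).trans_eq ?_
    exact bernoulliExp_const _ _ _
  have hsum : bernoulliExp p' E (fun s => bernoulliExp δ E (fun t => F₁ (s ∪ t) + (F₂ s + F₃ s t)))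
      = bernoulliExp p E F₁
        + (bernoulliExp p' E F₂ + bernoulliExp p' E (fun s => bernoulliExp δ E (F₃ s))) := by
    rw [bernoulliExp_union hpp E F₁, ← bernoulliExp_add, ← bernoulliExp_add]
    refine bernoulliExp_congr fun s _ => ?_
    rw [bernoulliExp_add, bernoulliExp_add, bernoulliExp_const]
  rw [bernoulliExp_union hpp]
  refine (bernoulliExp_mono hp' hp'1 fun s hs =>
    bernoulliExp_mono hδ hδ1 fun t ht => hpt s hs t ht).trans ?_
  rw [hsum]
  linarith

lemma not_hasLargeOuterCores_empty {ε : ℝ} (hε : 0 ≤ ε) :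
    ¬ HasLargeOuterCores ε (SimpleGraph.fromEdgeSet
      ((∅ : Finset (Sym2 V)) : Set (Sym2 V))) := by
  intro h
  obtain ⟨v, -, hlt⟩ := h.exists_reachSet (G := (⊥ : SimpleGraph V)) (Finset.empty_subset _) 1
  have hempty : descendSet (⊥ : SimpleGraph V) 1 ∅ = ∅ := by
    refine Finset.eq_empty_of_forall_notMem fun w hw => ?_
    obtain ⟨x, hx, -⟩ := mem_descendSet.1 hw
    exact hx
  rw [hempty, Finset.empty_sdiff, Finset.card_empty, Nat.cast_zero] at hlt
  exact absurd hlt (not_lt.2 (by positivity))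

lemma bernoulliExp_indicator_le_of_not_empty {α : Type} [DecidableEq α] {p : ℝ} (h0 : 0 ≤ p)
    (h1 : p ≤ 1) (E : Finset α) {P : Finset α → Prop} (hP : ¬ P ∅) :
    bernoulliExp p E (fun s => if P s then 1 else 0) ≤ 1 - (1 - p) ^ E.card := by
  have hnn : ∀ s ∈ E.powerset,
      0 ≤ p ^ s.card * (1 - p) ^ (E.card - s.card) * (if P s then (0 : ℝ) else 1) := by
    intro s _
    have : 0 ≤ 1 - p := by linarith
    split_ifs <;> positivity
  have hle := Finset.single_le_sum hnn (Finset.empty_mem_powerset E)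
  rw [if_neg hP] at hle
  simp only [Finset.card_empty, pow_zero, Nat.sub_zero, one_mul, mul_one] at hle
  have heq : (fun s => if P s then (1 : ℝ) else 0) = fun s => 1 - if P s then (0 : ℝ) else 1 := by
    funext s; split_ifs <;> simp
  rw [heq, bernoulliExp_one_sub]
  exact sub_le_sub_left hle 1

lemma le_exp_of_le_of_le_one_sub_pow {q γ : ℝ} (hq : 0 < q) (hγ : 0 < γ) (hq1 : q ≤ 1) (N : ℕ) :
    ∃ c > 0, ∀ (n : ℕ) (x : ℝ), 0 < n → x ≤ 1 - q ^ n →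
      (N ≤ n → x ≤ 5 * Real.exp (-γ * n)) → x ≤ Real.exp (-c * n) := by
  set M := max N (⌈4 / γ⌉₊ + 1) with hM
  have hM0 : 0 < M := lt_of_lt_of_le (Nat.succ_pos _) (le_max_right _ _)
  have hM0' : (0 : ℝ) < M := by exact_mod_cast hM0
  refine ⟨min (γ / 2) (q ^ M / M), lt_min (by positivity) (by positivity), ?_⟩
  intro n x hn hx hbig
  have hn0 : (0 : ℝ) < n := by exact_mod_cast hn
  rcases le_total M n with h | h
  · refine (hbig ((le_max_left _ _).trans h)).trans ?_
    have hγn : 4 ≤ γ * n := by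
      have h1 : 4 / γ ≤ n := (Nat.le_ceil _).trans
        (by exact_mod_cast (Nat.le_succ _).trans ((le_max_right _ _).trans h))
      rwa [div_le_iff₀ hγ, mul_comm] at h1
    have h5 : (5 : ℝ) ≤ Real.exp (γ * n / 2) := by
      have h2 : (2.5 : ℝ) ≤ Real.exp 1 := by linarith [Real.exp_one_gt_d9]
      have h3 : Real.exp 1 * Real.exp 1 ≤ Real.exp (γ * n / 2) := by
        rw [← Real.exp_add]; exact Real.exp_le_exp.2 (by linarith)
      nlinarith
    calc 5 * Real.exp (-γ * n) ≤ Real.exp (γ * n / 2) * Real.exp (-γ * n) := by gcongr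
      _ = Real.exp (-(γ / 2) * n) := by rw [← Real.exp_add]; congr 1; ring
      _ ≤ _ := Real.exp_le_exp.2 (by
        have := min_le_left (γ / 2) (q ^ M / M)
        nlinarith)
  · have h1 : q ^ M ≤ q ^ n := pow_le_pow_of_le_one hq.le hq1 h
    have h2 : min (γ / 2) (q ^ M / M) * n ≤ q ^ M := by
      calc _ ≤ q ^ M / M * M := by
            gcongr
            exact min_le_right _ _
        _ = q ^ M := by field_simp
    have h3 := Real.add_one_le_exp (-min (γ / 2) (q ^ M / M) * n)
    linarith

end MainBound

theorem two_cores_outside_giant_are_small (d : ℕ) (hd : 3 ≤ d) (p : ℝ)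
    (hp : 1 / ((d : ℝ) - 1) < p) (hp1 : p < 1)
    (ε b : ℝ) (hε : 0 < ε) (hb : 0 < b) :
    ∃ R : ℕ, 0 < R ∧ ∃ c > (0:ℝ),
      ∀ (V : Type) [Fintype V] [DecidableEq V] (G : SimpleGraph V),
        IsRegularExpander G b d → ((2 * R : ℕ) : ℕ∞) < G.girth →
        percProb G p (fun H =>
            ∃ c₁ : H.ConnectedComponent, IsLargestComp H c₁ ∧
              ε * Fintype.card V <
                ((Finset.univ.filter (fun v : V =>
                    H.connectedComponentMk v ≠ c₁ ∧
                    v ∈ (twoCoreComp H (H.connectedComponentMk v)).support)).card : ℝ))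
          ≤ Real.exp (-c * Fintype.card V) := by
  have hd3 : (3 : ℝ) ≤ d := by exact_mod_cast hd
  have hp0 : 0 < p := lt_trans (by apply one_div_pos.2; linarith) hp
  set η := min ε 1 / 8 with hη_def
  have hη : 0 < η := by positivity
  have hη8 : 8 * η ≤ ε := by rw [hη_def]; linarith [min_le_left ε 1]
  have hη1 : 8 * η ≤ 1 := by rw [hη_def]; linarith [min_le_right ε 1]
  set τ := η / 4 with hτ_def
  have hτ : 0 < τ := by positivity
  obtain ⟨p', hp'0, hp'p, r₀, hr₀⟩ := exists_rootProb_close hd hp0 hp1 hτ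
  set δ := (p - p') / (1 - p') with hδ_def
  have hp'1 : 0 < 1 - p' := by linarith
  have hδ0 : 0 < δ := div_pos (by linarith) hp'1
  have hδ1 : δ ≤ 1 := (div_le_one hp'1).2 (by linarith)
  have hpp : 1 - p = (1 - p') * (1 - δ) := by rw [hδ_def]; field_simp; ring
  obtain ⟨L, hL'⟩ := exists_nat_gt (2 * d / (b * η))
  have hL : 2 * d < L * (b * η) := (div_lt_iff₀ (by positivity)).1 hL'
  have hL0 : 0 < L := by
    have : (0 : ℝ) < L := lt_of_le_of_lt (by positivity) hL'
    exact_mod_cast this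
  have hL0' : (0 : ℝ) < L := by exact_mod_cast hL0
  set κ := δ ^ L * (b * η / (2 * L)) with hκ_def
  have hκ : 0 < κ := by positivity
  obtain ⟨m, hm⟩ := exists_nat_gt (2 / κ)
  set r := max r₀ m with hr_def
  have hR : 2 ≤ ((r + 1 : ℕ) : ℝ) * κ := by
    rw [← div_le_iff₀ hκ]
    exact hm.le.trans (by exact_mod_cast (le_max_right r₀ m).trans (Nat.le_succ _))
  set γ₁ := τ ^ 2 / (4 * (2 * ((d : ℝ) + 1) ^ (r + 1)) ^ 2 * d) with hγ₁
  have hγ₁0 : 0 < γ₁ := by positivity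
  obtain ⟨N, hN⟩ := exists_nat_gt (((d : ℝ) + 1) ^ (r + 1) / η)
  have hq0 : 0 < (1 - p) ^ d := pow_pos (by linarith) d
  have hq1 : (1 - p) ^ d ≤ 1 := pow_le_one₀ (by linarith) (by linarith)
  obtain ⟨c, hc, hfinal⟩ := le_exp_of_le_of_le_one_sub_pow hq0
    (lt_min hγ₁0 (half_pos hκ)) hq1 N
  refine ⟨r + 1, Nat.succ_pos r, c, hc, ?_⟩
  intro V _ _ G hG hgirth
  have hg : 2 * (r + 1) < G.girth := by exact_mod_cast hgirth
  have hn : 0 < Fintype.card V := by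
    rw [Fintype.card_pos_iff]
    by_contra hV
    rw [not_nonempty_iff] at hV
    have hacyc : G.IsAcyclic := fun v => isEmptyElim v
    rw [SimpleGraph.girth_eq_zero.2 hacyc] at hg
    exact absurd hg (Nat.not_lt_zero _)
  have hn0 : (0 : ℝ) < (Fintype.card V : ℝ) := by exact_mod_cast hn
  refine hfinal (Fintype.card V) _ hn ?_ fun hNn => ?_
  · refine (bernoulliExp_indicator_le_of_not_empty hp0.le hp1.le (edgeFinset' G)
      (not_hasLargeOuterCores_empty hε.le)).trans ?_
    rw [← pow_mul, mul_comm d]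
    exact sub_le_sub_left (pow_le_pow_of_le_one (by linarith) (by linarith)
      (card_edgeFinset'_le hG.2)) 1
  · have hbig : ((d : ℝ) + 1) ^ (r + 1) ≤ η * Fintype.card V := by
      rw [mul_comm, ← div_le_iff₀ hη]
      exact hN.le.trans (by exact_mod_cast hNn)
    have hmain := bernoulliExp_hasLargeOuterCores_le (r := r) hp'0.le (by linarith) hδ0.le hδ1 hpp
      (by omega) hb hη hτ.le (by linarith) (by linarith) (hr₀ r (le_max_left _ _)) hL0 hL hR hG hg
      hn hbig
    have hmono : percProb G p (HasLargeOuterCores ε) ≤ bernoulliExp p (edgeFinset' G) (fun s =>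
        if HasLargeOuterCores (8 * η) (SimpleGraph.fromEdgeSet (s : Set (Sym2 V)))
          then 1 else 0) := by
      refine bernoulliExp_mono hp0.le hp1.le
        (F := fun s : Finset (Sym2 V) => if HasLargeOuterCores ε (SimpleGraph.fromEdgeSet (s : Set (Sym2 V)))
          then 1 else 0) fun s _ => ?_
      by_cases h : HasLargeOuterCores ε (SimpleGraph.fromEdgeSet (s : Set (Sym2 V)))
      · have h' : HasLargeOuterCores (8 * η) (SimpleGraph.fromEdgeSet (s : Set (Sym2 V))) := by
          obtain ⟨c₁, h1, h2⟩ := h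
          exact ⟨c₁, h1, lt_of_le_of_lt (mul_le_mul_of_nonneg_right hη8 hn0.le) h2⟩
        rw [if_pos h, if_pos h']
      · rw [if_neg h]
        split_ifs <;> simp
    refine (hmono.trans hmain).trans ?_
    have e1 : Real.exp (-γ₁ * Fintype.card V)
        ≤ Real.exp (-(min γ₁ (κ / 2)) * Fintype.card V) :=
      Real.exp_le_exp.2 (mul_le_mul_of_nonneg_right (neg_le_neg (min_le_left _ _)) hn0.le)
    have e2 : Real.exp (-(κ / 2) * Fintype.card V)
        ≤ Real.exp (-(min γ₁ (κ / 2)) * Fintype.card V) :=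
      Real.exp_le_exp.2 (mul_le_mul_of_nonneg_right (neg_le_neg (min_le_right _ _)) hn0.le)
    have e3 : Real.exp (1 - κ / 2 * Fintype.card V)
        = Real.exp 1 * Real.exp (-(κ / 2) * Fintype.card V) := by
      rw [← Real.exp_add]; congr 1; ring
    have e4 : Real.exp 1 ≤ 3 := by linarith [Real.exp_one_lt_d9]
    rw [e3]
    nlinarith [Real.exp_pos (-(κ / 2) * Fintype.card V)]

end Percolation

end
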